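/- arXiv:1211.4208 — 7 statements merged into one kernel-verified Lean document; each statement's English description precedes it below -/
import Mathlib

section
/- Let G be a group, let U, V ⊆ G be finite nonempty sets, and let C ⊆ U and D ⊆ V. Then there exists ζ ∈ U such that |Dζ ∩ C|/|V| ≥ (|C|/|U|)·(|D|/|V|) − max_{d ∈ D} |dU △ U|/|U| (where for D empty the maximum is taken to be 0). -/
open scoped symmDiff

/-!
The point `ζ` is found by averaging. Double counting the pairs `(d, ζ) ∈ D × U` with `d * ζ ∈ C`
gives `∑ ζ ∈ U, |Dζ ∩ C| = ∑ d ∈ D, |dU ∩ C|`. Since `C ⊆ U`, every point of `C` outside `dU` lies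
in `dU ∆ U`, so each term on the right is at least `|C| - M`, where `M = max_{d ∈ D} |dU ∆ U|`.
Hence some `ζ ∈ U` has `|U| |Dζ ∩ C| ≥ |D| (|C| - M)`. Dividing by `|U| |V|` and using
`|D| ≤ |V|` gives the claim.
-/

theorem sum_card_translate_inter {G : Type*} [Group G] [DecidableEq G] (U C D : Finset G) :
    ∑ ζ ∈ U, (D.image (· * ζ) ∩ C).card = ∑ d ∈ D, (U.image (d * ·) ∩ C).card := by
  have hl : ∀ ζ, (D.image (· * ζ) ∩ C).card = (D.filter fun d => d * ζ ∈ C).card := fun ζ => by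
    rw [← Finset.filter_mem_eq_inter, Finset.filter_image,
      Finset.card_image_of_injective _ (mul_left_injective ζ)]
  have hr : ∀ d, (U.image (d * ·) ∩ C).card = (U.filter fun ζ => d * ζ ∈ C).card := fun d => by
    rw [← Finset.filter_mem_eq_inter, Finset.filter_image,
      Finset.card_image_of_injective _ (mul_right_injective d)]
  simp only [hl, hr, Finset.card_filter]
  exact Finset.sum_comm

theorem card_le_card_inter_add_card_symmDiff {α : Type*} [DecidableEq α] {U C : Finset α}
    (hC : C ⊆ U) (W : Finset α) : C.card ≤ (W ∩ C).card + (W ∆ U).card := by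
  refine le_trans (Finset.card_le_card fun x hx => ?_) (Finset.card_union_le _ _)
  have := hC hx
  simp only [Finset.mem_union, Finset.mem_inter, Finset.mem_symmDiff]
  tauto

/-- Lemma 2.3 (1), finite form. For finite nonempty `U, V ⊆ G` and `C ⊆ U`, `D ⊆ V`, there is
`ζ ∈ U` with `|Dζ ∩ C|/|V| ≥ (|C|/|U|)·(|D|/|V|) − max_{d ∈ D} |dU ∆ U|/|U|`
(the maximum being `0` when `D` is empty). -/
theorem stmt1 {G : Type*} [Group G] [DecidableEq G]
    (U V : Finset G) (hU : U.Nonempty) (hV : V.Nonempty)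
    (C D : Finset G) (hC : C ⊆ U) (hD : D ⊆ V) :
    ∃ ζ ∈ U,
      ((C.card : ℝ) / U.card) * ((D.card : ℝ) / V.card)
          - ((D.sup fun d => ((U.image (d * ·)) ∆ U).card : ℕ) : ℝ) / U.card
        ≤ ((D.image (· * ζ) ∩ C).card : ℝ) / V.card := by
  set M : ℕ := D.sup fun d => ((U.image (d * ·)) ∆ U).card with hM
  have hsum : D.card * C.card ≤ ∑ ζ ∈ U, ((D.image (· * ζ) ∩ C).card) + D.card * M := by
    rw [sum_card_translate_inter, ← smul_eq_mul, ← smul_eq_mul, ← Finset.sum_const,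
      ← Finset.sum_const, ← Finset.sum_add_distrib]
    refine Finset.sum_le_sum fun d hd => ?_
    exact (card_le_card_inter_add_card_symmDiff hC _).trans
      (Nat.add_le_add_left
        (Finset.le_sup (f := fun d => ((U.image (d * ·)) ∆ U).card) hd) _)
  obtain ⟨ζ, hζ, hmax⟩ := U.exists_max_image (fun ζ => (D.image (· * ζ) ∩ C).card) hU
  refine ⟨ζ, hζ, ?_⟩
  have hle := Finset.sum_le_card_nsmul U _ _ hmax
  rw [smul_eq_mul] at hle
  have key : D.card * C.card ≤ U.card * (D.image (· * ζ) ∩ C).card + V.card * M :=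
    hsum.trans (Nat.add_le_add hle (Nat.mul_le_mul_right _ (Finset.card_le_card hD)))
  have key' : (D.card : ℝ) * C.card ≤ U.card * (D.image (· * ζ) ∩ C).card + V.card * M := by
    exact_mod_cast key
  have hu : (0 : ℝ) < U.card := by exact_mod_cast hU.card_pos
  have hv : (0 : ℝ) < V.card := by exact_mod_cast hV.card_pos
  rw [sub_le_iff_le_add, div_mul_div_comm, div_add_div _ _ hv.ne' hu.ne', mul_comm (V.card : ℝ) U.card]
  gcongr
  linarith
end

section
/- Let G be an amenable group, and for i = 1, …, n let A_i ⊆ G have positive Banach density d(A_i) = α_i. Let β = α_1·α_2⋯α_n, let 0 ≤ ε < β², and let r = ⌊(β − ε)/(β² − ε)⌋. Then for every subset P ⊆ G and every g_0 ∈ P there exists a finite set L ⊆ G with |L| ≤ r and g_0 ∈ L such that P ⊆ L·(Δ_ε(A_1) ∩ ⋯ ∩ Δ_ε(A_n)). -/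
/-!
Call a finite `L ⊆ G` containing `g₀` *separated* if for distinct `g, h ∈ L` one of `g⁻¹h`, `h⁻¹g`
lies outside `D = ⋂ i, Δ_ε(A_i)`. Every separated set has at most `(β - ε)/(β² - ε)` elements, so
there is one of maximal cardinality, and maximality forces `G = L·D`, using `1 ∈ D`.

For the bound (`card_separated_le`), choose for each `i` a sufficiently invariant finite set `K_i`
on which all translates `gA_i`, `g ∈ L`, have relative density close to `α_i`, and on which
`gA_i ∩ hA_i` has relative density at most about `ε` whenever `g⁻¹h ∉ Δ_ε(A_i)` (`exists_approx`).
In the box `∏ K_i` the sets `∏ gA_i` then have density about `β`, and their pairwise intersections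
have density at most about `ε`. With `k = |L|`, Cauchy–Schwarz (`sq_sum_prod_relDens_le`) gives
`(kβ)² ≤ kβ + k(k - 1)ε` in the limit, that is, `k(β² - ε) ≤ β - ε`.
-/

open scoped Pointwise symmDiff

variable {G : Type*}

/-- `K` is a nonempty finite `(H, ε)`-invariant set: `|hK ∆ K| < ε|K|` for all `h ∈ H`. -/
def IsFolnerInvariant [Group G] [DecidableEq G] (H : Finset G) (ε : ℝ) (K : Finset G) : Prop :=
  K.Nonempty ∧ ∀ h ∈ H, (((K.image (h * ·)) ∆ K).card : ℝ) < ε * K.card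

/-- Følner's condition: for every finite `H ⊆ G` and `ε > 0` there is a nonempty finite
`(H, ε)`-invariant set. -/
def IsAmenable (G : Type*) [Group G] [DecidableEq G] : Prop :=
  ∀ (H : Finset G) (ε : ℝ), 0 < ε → ∃ K : Finset G, IsFolnerInvariant H ε K

/-- The (upper) Banach density of `A ⊆ G`: the least upper bound of the `α` such that for every
finite `H ⊆ G` and every `ε > 0` some nonempty finite `(H, ε)`-invariant `K` satisfies
`|A ∩ K|/|K| ≥ α`. -/
noncomputable def banachDensity [Group G] [DecidableEq G] (A : Set G) : ℝ :=
  sSup {α : ℝ | ∀ (H : Finset G) (ε : ℝ), 0 < ε →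
    ∃ K : Finset G, IsFolnerInvariant H ε K ∧ α ≤ ((A ∩ ↑K).ncard : ℝ) / K.card}

/-- The lower Banach density of `A ⊆ G`: the least upper bound of the `α` such that for some
finite `H ⊆ G` and some `ε > 0` every nonempty finite `(H, ε)`-invariant `K` satisfies
`|A ∩ K|/|K| ≥ α`. -/
noncomputable def lowerBanachDensity [Group G] [DecidableEq G] (A : Set G) : ℝ :=
  sSup {α : ℝ | ∃ (H : Finset G) (ε : ℝ), 0 < ε ∧
    ∀ K : Finset G, IsFolnerInvariant H ε K → α ≤ ((A ∩ ↑K).ncard : ℝ) / K.card}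

/-- The `ε`-density Delta-set `Δ_ε(A) = {g ∈ G : d(A ∩ gA) > ε}`. -/
noncomputable def deltaSet [Group G] [DecidableEq G] (ε : ℝ) (A : Set G) : Set G :=
  {g | ε < banachDensity (A ∩ (g * ·) '' A)}

/-- `S ⊆ G` is thick if every finite subset of `G` has a right translate inside `S`. -/
def Thick [Group G] (S : Set G) : Prop :=
  ∀ H : Finset G, ∃ x : G, ∀ h ∈ H, h * x ∈ S

/-- `S ⊆ G` is `k`-syndetic if `G = F·S` for some finite `F` with `|F| ≤ k`. -/
def IsSyndetic [Group G] (k : ℕ) (S : Set G) : Prop :=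
  ∃ F : Finset G, F.card ≤ k ∧ ∀ g : G, g ∈ (↑F : Set G) * S

/-- `S ⊆ G` is piecewise `k`-syndetic if `F·S` is thick for some finite `F` with `|F| ≤ k`. -/
def PiecewiseSyndetic [Group G] (k : ℕ) (S : Set G) : Prop :=
  ∃ F : Finset G, F.card ≤ k ∧ Thick ((↑F : Set G) * S)

/-- `A` is finitely embeddable in `B` (`A ◁ B`): every finite subset of `A` has a right
translate contained in `B`. -/
def FinEmbeddable [Group G] (A B : Set G) : Prop :=
  ∀ H : Finset G, ↑H ⊆ A → ∃ x : G, ∀ h ∈ H, h * x ∈ B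

/-! ### Relative densities and Banach density -/

/-- The relative density `|A ∩ K|/|K|` of `A` in the finite set `K`. -/
noncomputable def relDens {G : Type*} (K : Finset G) (A : Set G) : ℝ :=
  ((A ∩ ↑K).ncard : ℝ) / K.card

lemma relDens_nonneg {G : Type*} (K : Finset G) (A : Set G) : 0 ≤ relDens K A := by
  unfold relDens; positivity

lemma relDens_le_one {G : Type*} (K : Finset G) (A : Set G) : relDens K A ≤ 1 := by
  unfold relDens
  apply div_le_one_of_le₀ _ (Nat.cast_nonneg _)
  have h := Set.ncard_le_ncard (Set.inter_subset_right : A ∩ ↑K ⊆ ↑K) K.finite_toSet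
  rw [Set.ncard_coe_finset] at h
  exact_mod_cast h

lemma relDens_eq_sum {G : Type*} (K : Finset G) (A : Set G) :
    relDens K A = (∑ x ∈ K, A.indicator (fun _ => (1 : ℝ)) x) * (K.card : ℝ)⁻¹ := by
  classical
  have h : A ∩ ↑K = ↑(K.filter (· ∈ A)) := by ext; simp [and_comm]
  rw [relDens, h, Set.ncard_coe_finset, div_eq_mul_inv]
  simp [Set.indicator_apply]

section Density
variable {G : Type*} [Group G] [DecidableEq G]

lemma bddAbove_banach (A : Set G) : BddAbove {α : ℝ | ∀ (H : Finset G) (ε : ℝ), 0 < ε →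
    ∃ K : Finset G, IsFolnerInvariant H ε K ∧ α ≤ ((A ∩ ↑K).ncard : ℝ) / K.card} := by
  refine ⟨1, fun α hα => ?_⟩
  obtain ⟨K, -, h⟩ := hα ∅ 1 one_pos
  exact h.trans (relDens_le_one K A)

lemma exists_forall_relDens_lt {A : Set G} {c : ℝ} (h : banachDensity A < c) :
    ∃ (H : Finset G) (η : ℝ), 0 < η ∧ ∀ K, IsFolnerInvariant H η K → relDens K A < c := by
  by_contra! hc
  exact absurd (le_csSup (bddAbove_banach A) hc) (not_le.2 h)

/-- The positivity hypothesis excludes the junk value `sSup ∅ = 0`. -/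
lemma exists_lt_relDens {A : Set G} {c : ℝ} (h0 : 0 < banachDensity A) (h : c < banachDensity A)
    (H : Finset G) {η : ℝ} (hη : 0 < η) : ∃ K, IsFolnerInvariant H η K ∧ c < relDens K A := by
  have hne : {α : ℝ | ∀ (H : Finset G) (ε : ℝ), 0 < ε → ∃ K : Finset G, IsFolnerInvariant H ε K ∧
      α ≤ ((A ∩ ↑K).ncard : ℝ) / K.card}.Nonempty := by
    by_contra hne
    rw [Set.not_nonempty_iff_eq_empty] at hne
    rw [banachDensity, hne, Real.sSup_empty] at h0
    exact lt_irrefl _ h0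
  obtain ⟨a, ha, hca⟩ := exists_lt_of_lt_csSup hne h
  obtain ⟨K, hK, haK⟩ := ha H η hη
  exact ⟨K, hK, hca.trans_le haK⟩

lemma banachDensity_le_one {A : Set G} (h0 : 0 < banachDensity A) : banachDensity A ≤ 1 := by
  by_contra! h
  obtain ⟨K, -, hK⟩ := exists_lt_relDens h0 h ∅ one_pos
  exact absurd (relDens_le_one K A) (not_le.2 hK)

lemma IsFolnerInvariant.mono {H H' : Finset G} {η η' : ℝ} {K : Finset G}
    (h : IsFolnerInvariant H η K) (hH : H' ⊆ H) (hη : η ≤ η') : IsFolnerInvariant H' η' K :=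
  ⟨h.1, fun x hx => (h.2 x (hH hx)).trans_le (by gcongr)⟩

/-- Relative density in an almost invariant set is almost translation invariant, because
`|gA ∩ K| = |A ∩ g⁻¹K|`. -/
lemma abs_relDens_translate_sub_le {H K : Finset G} {η : ℝ} (hK : IsFolnerInvariant H η K) {g : G}
    (hg : g⁻¹ ∈ H) (A : Set G) : |relDens K ((g * ·) '' A) - relDens K A| ≤ η := by
  have hpos : (0 : ℝ) < K.card := by exact_mod_cast hK.1.card_pos
  have h1 : (((g * ·) '' A) ∩ ↑K).ncard = (A ∩ ↑(K.image (g⁻¹ * ·))).ncard := by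
    rw [← Set.ncard_image_of_injective _ (mul_right_injective g⁻¹)]
    congr 1
    ext x
    simp only [Set.mem_image, Set.mem_inter_iff, Finset.coe_image, Finset.mem_coe]
    constructor
    · rintro ⟨y, ⟨⟨a, ha, rfl⟩, hy⟩, rfl⟩
      exact ⟨by simpa using ha, _, hy, rfl⟩
    · rintro ⟨hx, y, hy, rfl⟩
      exact ⟨y, ⟨⟨_, hx, by simp⟩, hy⟩, rfl⟩
  have key : ∀ S T : Finset G, ((A ∩ ↑S).ncard : ℝ) ≤ (A ∩ ↑T).ncard + (S ∆ T).card := by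
    intro S T
    have h : A ∩ ↑S ⊆ (A ∩ ↑T) ∪ ↑(S ∆ T) := by
      rintro x ⟨hxA, hxS⟩
      by_cases hT : x ∈ T
      · exact Or.inl ⟨hxA, hT⟩
      · exact Or.inr (Finset.mem_coe.2 (Finset.mem_symmDiff.2 (Or.inl ⟨hxS, hT⟩)))
    have h2 := Set.ncard_le_ncard h
      (((T.finite_toSet).inter_of_right A).union (Finset.finite_toSet _))
    have h3 := Set.ncard_union_le (A ∩ ↑T) (↑(S ∆ T) : Set G)
    rw [Set.ncard_coe_finset] at h3
    exact_mod_cast h2.trans h3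
  have hs := (hK.2 _ hg).le
  have k1 := key (K.image (g⁻¹ * ·)) K
  have k2 := key K (K.image (g⁻¹ * ·))
  rw [symmDiff_comm] at k2
  rw [relDens, relDens, h1, ← sub_div, abs_div, abs_of_pos hpos, div_le_iff₀ hpos, abs_le]
  constructor <;> linarith

lemma exists_common_upper (F : Finset G) (B : G → Set G) (c : G → ℝ)
    (h : ∀ g ∈ F, banachDensity (B g) < c g) :
    ∃ (H : Finset G) (η : ℝ), 0 < η ∧ ∀ K, IsFolnerInvariant H η K →
      ∀ g ∈ F, relDens K (B g) < c g := by
  induction F using Finset.induction_on with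
  | empty => exact ⟨∅, 1, one_pos, by simp⟩
  | insert a F _ ih =>
    obtain ⟨H, η, hη, hK⟩ := ih fun g hg => h g (Finset.mem_insert_of_mem hg)
    obtain ⟨H', η', hη', hK'⟩ := exists_forall_relDens_lt (h a (Finset.mem_insert_self _ _))
    refine ⟨H ∪ H', min η η', lt_min hη hη', fun K hi g hg => ?_⟩
    rcases Finset.mem_insert.1 hg with rfl | hg
    · exact hK' K (hi.mono Finset.subset_union_right (min_le_right _ _))
    · exact hK K (hi.mono Finset.subset_union_left (min_le_left _ _)) g hg

/-- A single finite set realizing, up to `δ`, the Banach density of all translates `gA`, `g ∈ L`,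
and the bound `ε` on those intersections `gA ∩ hA` for which `g⁻¹h ∉ Δ_ε(A)`. -/
lemma exists_approx {A : Set G} (h0 : 0 < banachDensity A) (L : Finset G) (ε : ℝ) {δ : ℝ}
    (hδ : 0 < δ) : ∃ K : Finset G, K.Nonempty ∧
      (∀ g ∈ L, |relDens K ((g * ·) '' A) - banachDensity A| ≤ δ) ∧
      ∀ g ∈ L, ∀ h ∈ L, g⁻¹ * h ∉ deltaSet ε A →
        relDens K (((g * ·) '' A) ∩ ((h * ·) '' A)) ≤ ε + δ := by
  classical
  obtain ⟨H₁, η₁, hη₁, hK₁⟩ := exists_forall_relDens_lt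
    (show banachDensity A < banachDensity A + δ / 2 by linarith)
  obtain ⟨H₂, η₂, hη₂, hK₂⟩ := exists_common_upper
    (((L ×ˢ L).image fun p => p.1⁻¹ * p.2).filter (· ∉ deltaSet ε A))
    (fun g => A ∩ (g * ·) '' A) (fun _ => ε + δ / 2) (by
      intro g hg
      have := (Finset.mem_filter.1 hg).2
      simp only [deltaSet, Set.mem_ofPred_eq, not_lt] at this
      linarith)
  obtain ⟨K, hK, hlow⟩ := exists_lt_relDens h0
    (show banachDensity A - δ / 2 < banachDensity A by linarith)
    (H₁ ∪ H₂ ∪ L.image (·⁻¹)) (lt_min (lt_min hη₁ hη₂) (half_pos hδ))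
  have e1 := hK₁ K (hK.mono (fun x hx => by simp [hx])
    ((min_le_left _ _).trans (min_le_left _ _)))
  have e2 := hK₂ K (hK.mono (fun x hx => by simp [hx])
    ((min_le_left _ _).trans (min_le_right _ _)))
  have tr : ∀ g ∈ L, ∀ B : Set G, |relDens K ((g * ·) '' B) - relDens K B| ≤ δ / 2 := by
    intro g hg B
    refine (abs_relDens_translate_sub_le hK (g := g) ?_ B).trans (min_le_right _ _)
    exact Finset.mem_union_right _ (Finset.mem_image_of_mem _ hg)
  refine ⟨K, hK.1, fun g hg => ?_, fun g hg h hh hgh => ?_⟩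
  · have := abs_le.1 (tr g hg A)
    rw [abs_le]
    constructor <;> linarith [this.1, this.2]
  · have hu := e2 (g⁻¹ * h) (Finset.mem_filter.2 ⟨Finset.mem_image.2
      ⟨(g, h), Finset.mem_product.2 ⟨hg, hh⟩, rfl⟩, hgh⟩)
    have ht := (abs_le.1 (tr g hg (A ∩ (g⁻¹ * h * ·) '' A))).2
    have heq : (g * ·) '' (A ∩ (g⁻¹ * h * ·) '' A) = ((g * ·) '' A) ∩ ((h * ·) '' A) := by
      rw [Set.image_inter (mul_right_injective g), Set.image_image]
      simp [mul_assoc]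
    rw [heq] at ht
    linarith

end Density

/-! ### Second moment inequality in a box -/

lemma prod_le_factor {ι : Type*} [Fintype ι] {f : ι → ℝ} (h0 : ∀ i, 0 ≤ f i) (h1 : ∀ i, f i ≤ 1)
    (i : ι) : ∏ j, f j ≤ f i := by
  classical
  rw [← Finset.mul_prod_erase _ f (Finset.mem_univ i)]
  exact mul_le_of_le_one_right (h0 i) (Finset.prod_le_one (fun j _ => h0 j) fun j _ => h1 j)

/-- Cauchy–Schwarz in the box `∏ K_i`, applied to the function counting how many of the sets
`∏ B_{g,i}`, `g ∈ L`, contain a given point. -/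
lemma sq_sum_prod_relDens_le {G ι : Type*} [DecidableEq G] {n : ℕ} (K : Fin n → Finset G)
    (hK : ∀ i, (K i).Nonempty) (L : Finset ι) (B : ι → Fin n → Set G) :
    (∑ g ∈ L, ∏ i, relDens (K i) (B g i)) ^ 2 ≤
      ∑ g ∈ L, ∑ h ∈ L, ∏ i, relDens (K i) (B g i ∩ B h i) := by
  set Ω := Fintype.piFinset K with hΩ
  set w : ℝ := ∏ i, ((K i).card : ℝ)⁻¹ with hw
  have hw0 : 0 ≤ w := Finset.prod_nonneg fun i _ => by positivity
  have hwΩ : w * (Ω.card : ℝ) = 1 := by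
    rw [hw, hΩ, Fintype.card_piFinset, Nat.cast_prod, ← Finset.prod_mul_distrib]
    refine Finset.prod_eq_one fun i _ => inv_mul_cancel₀ ?_
    exact_mod_cast (hK i).card_pos.ne'
  have hprod : ∀ C : Fin n → Set G, ∏ i, relDens (K i) (C i) =
      (∑ x ∈ Ω, ∏ i, (C i).indicator (fun _ => (1 : ℝ)) (x i)) * w := by
    intro C
    rw [hΩ, ← Finset.prod_univ_sum, hw, ← Finset.prod_mul_distrib]
    exact Finset.prod_congr rfl fun i _ => relDens_eq_sum _ _
  set F : ι → (Fin n → G) → ℝ := fun g x => ∏ i, (B g i).indicator (fun _ => (1 : ℝ)) (x i) with hF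
  have hinter : ∀ g h x, ∏ i, (B g i ∩ B h i).indicator (fun _ => (1 : ℝ)) (x i) =
      F g x * F h x := by
    intro g h x
    change _ = (∏ i, _) * ∏ i, _
    rw [← Finset.prod_mul_distrib]
    refine Finset.prod_congr rfl fun i _ => ?_
    by_cases h1 : x i ∈ B g i <;> by_cases h2 : x i ∈ B h i <;> simp [h1, h2]
  have hl : ∑ g ∈ L, ∏ i, relDens (K i) (B g i) = (∑ x ∈ Ω, ∑ g ∈ L, F g x) * w := by
    rw [Finset.sum_comm, Finset.sum_mul]
    exact Finset.sum_congr rfl fun g _ => hprod _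
  have hr : ∑ g ∈ L, ∑ h ∈ L, ∏ i, relDens (K i) (B g i ∩ B h i) =
      (∑ x ∈ Ω, (∑ g ∈ L, F g x) ^ 2) * w := by
    have : ∀ x, (∑ g ∈ L, F g x) ^ 2 = ∑ g ∈ L, ∑ h ∈ L, F g x * F h x := fun x => by
      rw [sq, Finset.sum_mul_sum]
    simp_rw [this, hprod, hinter]
    simp_rw [← Finset.sum_mul]
    congr 1
    rw [Finset.sum_comm (s := Ω)]
    exact Finset.sum_congr rfl fun g _ => Finset.sum_comm
  rw [hl, hr, mul_pow]
  calc (∑ x ∈ Ω, ∑ g ∈ L, F g x) ^ 2 * w ^ 2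
      ≤ (Ω.card * ∑ x ∈ Ω, (∑ g ∈ L, F g x) ^ 2) * w ^ 2 :=
        mul_le_mul_of_nonneg_right sq_sum_le_card_mul_sum_sq (sq_nonneg w)
    _ = (∑ x ∈ Ω, (∑ g ∈ L, F g x) ^ 2) * w * (w * Ω.card) := by ring
    _ = _ := by rw [hwΩ, mul_one]

/-! ### Separated sets -/

open Filter Topology in
/-- The bound on the size of a separated set, with `β = ∏ i, α i`. -/
lemma card_separated_le {G : Type*} [Group G] [DecidableEq G]
    {n : ℕ} {A : Fin n → Set G} {α : Fin n → ℝ}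
    (hpos : ∀ i, 0 < α i) (hd : ∀ i, banachDensity (A i) = α i)
    {ε : ℝ} (hε : ε < (∏ i, α i) ^ 2) {L : Finset G} (hne : L.Nonempty)
    (hL : ∀ g ∈ L, ∀ h ∈ L, g ≠ h →
      g⁻¹ * h ∉ ⋂ i, deltaSet ε (A i) ∨ h⁻¹ * g ∉ ⋂ i, deltaSet ε (A i)) :
    (L.card : ℝ) ≤ ((∏ i, α i) - ε) / ((∏ i, α i) ^ 2 - ε) := by
  set β := ∏ i, α i with hβ
  set k : ℝ := (L.card : ℝ) with hk
  have hkpos : 0 < k := Nat.cast_pos.2 hne.card_pos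
  have hδ : ∀ m : ℕ, (0 : ℝ) < 1 / ((m : ℝ) + 1) := fun m => by positivity
  have happ := fun (m : ℕ) (i : Fin n) =>
    exists_approx (A := A i) (by rw [hd]; exact hpos i) L ε (hδ m)
  choose K hKne hKa hKb using happ
  have hlim : Tendsto (fun m : ℕ => 1 / ((m : ℝ) + 1)) atTop (𝓝 0) :=
    tendsto_one_div_add_atTop_nhds_zero_nat
  have hprod : ∀ g ∈ L, Tendsto
      (fun m => ∏ i, relDens (K m i) ((g * ·) '' A i)) atTop (𝓝 β) := by
    intro g hg
    refine tendsto_finsetProd _ fun i _ => ?_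
    rw [tendsto_iff_norm_sub_tendsto_zero]
    refine squeeze_zero (fun _ => norm_nonneg _) (fun m => ?_) hlim
    rw [← hd i]
    exact hKa m i g hg
  have hsum : Tendsto (fun m => ∑ g ∈ L, ∏ i, relDens (K m i) ((g * ·) '' A i)) atTop
      (𝓝 (k * β)) := by
    have := tendsto_finsetSum L hprod
    simpa using this
  have hoff : ∀ m, ∀ g ∈ L, ∀ h ∈ L, g ≠ h →
      ∏ i, relDens (K m i) (((g * ·) '' A i) ∩ ((h * ·) '' A i)) ≤ ε + 1 / ((m : ℝ) + 1) := by
    intro m g hg h hh hgh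
    rcases hL g hg h hh hgh with h1 | h1
    all_goals
      simp only [Set.mem_iInter, not_forall] at h1
      obtain ⟨i, hi⟩ := h1
      refine (prod_le_factor (fun _ => relDens_nonneg _ _) (fun _ => relDens_le_one _ _) i).trans ?_
    · exact hKb m i g hg h hh hi
    · rw [Set.inter_comm]
      exact hKb m i h hh g hg hi
  have hineq : ∀ m, (∑ g ∈ L, ∏ i, relDens (K m i) ((g * ·) '' A i)) ^ 2 ≤
      (∑ g ∈ L, ∏ i, relDens (K m i) ((g * ·) '' A i)) +
        k * ((k - 1) * (ε + 1 / ((m : ℝ) + 1))) := by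
    intro m
    refine (sq_sum_prod_relDens_le (K m) (hKne m) L fun g i => (g * ·) '' A i).trans ?_
    have hrow : ∀ g ∈ L,
        ∑ h ∈ L, ∏ i, relDens (K m i) (((g * ·) '' A i) ∩ ((h * ·) '' A i)) ≤
        ∏ i, relDens (K m i) ((g * ·) '' A i) + (k - 1) * (ε + 1 / ((m : ℝ) + 1)) := by
      intro g hg
      rw [← Finset.add_sum_erase _ _ hg]
      simp only [Set.inter_self]
      gcongr
      refine (Finset.sum_le_card_nsmul _ _ (ε + 1 / ((m : ℝ) + 1)) fun h hh => ?_).trans ?_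
      · obtain ⟨h1, h2⟩ := Finset.mem_erase.1 hh
        exact hoff m g hg h h2 h1.symm
      · rw [nsmul_eq_mul, Finset.card_erase_of_mem hg, Nat.cast_sub hne.card_pos, Nat.cast_one]
    refine (Finset.sum_le_sum hrow).trans (le_of_eq ?_)
    rw [Finset.sum_add_distrib, Finset.sum_const, nsmul_eq_mul]
  have hfin : (k * β) ^ 2 ≤ k * β + k * ((k - 1) * (ε + 0)) :=
    le_of_tendsto_of_tendsto' (hsum.pow 2)
      (hsum.add (((hlim.const_add ε).const_mul (k - 1)).const_mul k)) hineq
  rw [le_div_iff₀ (by linarith)]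
  have : k * (k * (β ^ 2 - ε)) ≤ k * (β - ε) := by nlinarith
  exact le_of_mul_le_mul_left this hkpos

/-- Theorem 3.1. If `d(A_i) = α_i > 0` for `i = 1, …, n`, `β = α_1⋯α_n`, `0 ≤ ε < β²` and
`r = ⌊(β − ε)/(β² − ε)⌋`, then for every `P ⊆ G` and `g₀ ∈ P` there is a finite `L ⊆ G` with
`|L| ≤ r`, `g₀ ∈ L` and `P ⊆ L·(Δ_ε(A_1) ∩ ⋯ ∩ Δ_ε(A_n))`. -/
theorem stmt5 {G : Type*} [Group G] [DecidableEq G] (hG : IsAmenable G)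
    (n : ℕ) (A : Fin n → Set G) (α : Fin n → ℝ)
    (hpos : ∀ i, 0 < α i) (hd : ∀ i, banachDensity (A i) = α i)
    (ε : ℝ) (hε0 : 0 ≤ ε) (hε : ε < (∏ i, α i) ^ 2)
    (P : Set G) (g₀ : G) (hg₀ : g₀ ∈ P) :
    ∃ L : Finset G, L.card ≤ ⌊((∏ i, α i) - ε) / ((∏ i, α i) ^ 2 - ε)⌋₊ ∧ g₀ ∈ L ∧
      P ⊆ (↑L : Set G) * ⋂ i, deltaSet ε (A i) := by
  classical
  set r := ⌊((∏ i, α i) - ε) / ((∏ i, α i) ^ 2 - ε)⌋₊ with hr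
  set D := ⋂ i, deltaSet ε (A i) with hD
  have hα1 : ∀ i, α i ≤ 1 := fun i => by
    rw [← hd i]; exact banachDensity_le_one (by rw [hd]; exact hpos i)
  have hone : (1 : G) ∈ D := by
    simp only [hD, Set.mem_iInter, deltaSet, Set.mem_ofPred_eq, one_mul, Set.image_id',
      Set.inter_self]
    intro i
    rw [hd]
    have h1 : ∏ j, α j ≤ α i := prod_le_factor (fun j => (hpos j).le) hα1 i
    have h2 : 0 ≤ ∏ j, α j := Finset.prod_nonneg fun j _ => (hpos j).le
    nlinarith [hα1 i]
  let Good : Finset G → Prop := fun L => g₀ ∈ L ∧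
    ∀ g ∈ L, ∀ h ∈ L, g ≠ h → g⁻¹ * h ∉ D ∨ h⁻¹ * g ∉ D
  have hcard : ∀ L, Good L → L.card ≤ r := fun L hL =>
    Nat.le_floor (card_separated_le hpos hd hε ⟨g₀, hL.1⟩ hL.2)
  let S : Set ℕ := {m | ∃ L, Good L ∧ L.card = m}
  have hS : S.Nonempty := ⟨_, {g₀}, ⟨by simp, by simp +contextual⟩, rfl⟩
  have hSb : BddAbove S := ⟨r, by rintro _ ⟨L, hL, rfl⟩; exact hcard L hL⟩
  obtain ⟨L, hL, hLm⟩ := Nat.sSup_mem hS hSb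
  refine ⟨L, hcard L hL, hL.1, fun p _ => ?_⟩
  by_contra hpL
  have hsep : ∀ g ∈ L, g⁻¹ * p ∉ D := fun g hg hgD =>
    hpL (Set.mem_mul.2 ⟨g, hg, _, hgD, by simp⟩)
  have hpn : p ∉ L := fun h => hsep p h (by simpa using hone)
  have hgood : Good (insert p L) := by
    refine ⟨Finset.mem_insert_of_mem hL.1, fun g hg h hh hne => ?_⟩
    rcases Finset.mem_insert.1 hg with rfl | hg' <;> rcases Finset.mem_insert.1 hh with rfl | hh'
    · exact absurd rfl hne
    · exact Or.inr (hsep h hh')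
    · exact Or.inl (hsep g hg')
    · exact hL.2 g hg' h hh' hne
  have := le_csSup hSb ⟨_, hgood, rfl⟩
  rw [Finset.card_insert_of_notMem hpn] at this
  omega
end

section
/- Let G be an amenable group, and for i = 1, …, n let A_i ⊆ G have positive Banach density d(A_i) = α_i. Let β = α_1·α_2⋯α_n, let 0 ≤ ε < β², and let r = ⌊(β − ε)/(β² − ε)⌋. Then the intersection Δ_ε(A_1) ∩ ⋯ ∩ Δ_ε(A_n) is r-syndetic, and consequently its lower Banach density is at least 1/r. -/
/-!
Write `β = ∏ i, d(A i)` and `Δ = ⋂ i, Δ_ε(A i)`. For each `i` there is a Følner net of finite sets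
`K i` along which the relative density of `A i` converges to `d(A i)`; left translates of a set
have asymptotically equal relative densities, and no set has upper limit density above its Banach
density.

Let `F` be a finite set whose distinct elements `a`, `b` satisfy `a⁻¹b ∉ Δ` or `b⁻¹a ∉ Δ`. Choose a
point `x` of the box `∏ i, K i` uniformly at random and let `E a` be the event that `x i ∈ a • A i`
for every `i`. The coordinates are independent, so `P(E a) → β`. If `a ≠ b`, some `l` has
`d(a • A l ∩ b • A l) ≤ ε`, hence `P(E a ∩ E b) ≤ ε + o(1)`. Applying Cauchy–Schwarz to the number
of events that occur gives `(kβ)² ≤ kβ + k(k - 1)ε` with `k = |F|`, that is,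
`k ≤ (β - ε) / (β² - ε)` (`card_le_of_separated`).

Therefore a largest such `F` exists, has at most `r = ⌊(β - ε) / (β² - ε)⌋` elements, and satisfies
`G = F · Δ`, since any `g ∉ F · Δ` could be added to it. Finally, if at most `r` left translates of `Δ` cover `G`, then
their densities in a sufficiently invariant set are all close to that of `Δ` and add up to at
least `1`, so `Δ` has lower Banach density at least `1/r` (`one_div_le_lowerBanachDensity`).
-/

open scoped Pointwise symmDiff

variable {G : Type*}

open Filter Topology

/-! ### Relative density in finite sets -/

/-- The relative density `|S ∩ K| / |K|` of `S` in the finite set `K` (zero when `K` is empty). -/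
noncomputable def relDensity {G : Type*} (S : Set G) (K : Finset G) : ℝ :=
  ((S ∩ ↑K).ncard : ℝ) / K.card

theorem relDensity_nonneg {G : Type*} (S : Set G) (K : Finset G) : 0 ≤ relDensity S K := by
  unfold relDensity; positivity

theorem relDensity_le_one {G : Type*} (S : Set G) (K : Finset G) : relDensity S K ≤ 1 := by
  unfold relDensity
  refine div_le_one_of_le₀ ?_ (Nat.cast_nonneg _)
  have := Set.ncard_le_ncard (Set.inter_subset_right (s := S) (t := (K : Set G))) K.finite_toSet
  rw [Set.ncard_coe_finset] at this
  exact_mod_cast this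

open Classical in
theorem sum_indicator_eq {G : Type*} (S : Set G) {K : Finset G} (hK : K.Nonempty) :
    ∑ x ∈ K, (if x ∈ S then (1 : ℝ) else 0) = relDensity S K * K.card := by
  have h0 : (K.card : ℝ) ≠ 0 := by exact_mod_cast hK.card_pos.ne'
  have h1 : S ∩ (K : Set G) = ((K.filter (· ∈ S) : Finset G) : Set G) := by
    ext x; simp [and_comm]
  rw [relDensity, div_mul_cancel₀ _ h0, h1, Set.ncard_coe_finset, Finset.sum_boole]

/-- Relative density in an invariant set is almost unchanged under left translation. -/
theorem abs_relDensity_translate_sub_lt {G : Type*} [Group G] [DecidableEq G] {H : Finset G}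
    {η : ℝ} {K : Finset G} (hK : IsFolnerInvariant H η K) {h : G} (hh : h ∈ H) (S : Set G) :
    |relDensity ((h * ·) '' S) K - relDensity S K| < η := by
  have h0 : (0 : ℝ) < K.card := by exact_mod_cast hK.1.card_pos
  set D := (K.image (h * ·)) ∆ K with hD
  have hDlt := hK.2 h hh
  have hinj : Function.Injective (fun x : G => h * x) := mul_right_injective h
  -- Both `S ∩ K` and its translate `hS ∩ hK` have the same size, and `hK` differs from `K` by `D`.
  have e1 : (S ∩ (K : Set G)).ncard
      = (((h * ·) '' S) ∩ ((K.image (h * ·) : Finset G) : Set G)).ncard := by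
    rw [Finset.coe_image, ← Set.image_inter hinj, Set.ncard_image_of_injective _ hinj]
  have key : ∀ (X : Set G) (P Q : Finset G), (∀ x ∈ P, x ∈ Q ∨ x ∈ D) →
      (X ∩ (P : Set G)).ncard ≤ (X ∩ (Q : Set G)).ncard + D.card := by
    intro X P Q hPQ
    have hsub : X ∩ (P : Set G) ⊆ (X ∩ (Q : Set G)) ∪ (D : Set G) := by
      rintro x ⟨hx, hp⟩
      rcases hPQ x (by simpa using hp) with hq | hq
      · exact Or.inl ⟨hx, by simpa using hq⟩
      · exact Or.inr (by simpa using hq)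
    refine (Set.ncard_le_ncard hsub
      ((Q.finite_toSet.inter_of_right X).union D.finite_toSet)).trans ?_
    refine (Set.ncard_union_le _ _).trans ?_
    rw [Set.ncard_coe_finset]
  have k1 := key ((h * ·) '' S) K (K.image (h * ·)) (by
    intro x hx
    by_cases hq : x ∈ K.image (h * ·)
    · exact Or.inl hq
    · exact Or.inr (Finset.mem_symmDiff.2 (Or.inr ⟨hx, hq⟩)))
  have k2 := key ((h * ·) '' S) (K.image (h * ·)) K (by
    intro x hx
    by_cases hq : x ∈ K
    · exact Or.inl hq
    · exact Or.inr (Finset.mem_symmDiff.2 (Or.inl ⟨hx, hq⟩)))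
  rw [← e1] at k1 k2
  have k1' : ((((h * ·) '' S) ∩ (K : Set G)).ncard : ℝ) ≤ (S ∩ (K : Set G)).ncard + D.card := by
    exact_mod_cast k1
  have k2' : ((S ∩ (K : Set G)).ncard : ℝ) ≤ (((h * ·) '' S) ∩ (K : Set G)).ncard + D.card := by
    exact_mod_cast k2
  rw [relDensity, relDensity, ← sub_div, abs_div, abs_of_pos h0, div_lt_iff₀ h0, abs_lt]
  constructor <;> linarith

/-! ### Banach density along Følner nets -/

/-- Relative density in all sufficiently invariant sets is bounded by any number above the Banach
density. -/
theorem exists_relDensity_lt {G : Type*} [Group G] [DecidableEq G] {S : Set G} {c : ℝ} (hc : banachDensity S < c) :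
    ∃ (H : Finset G) (η : ℝ), 0 < η ∧ ∀ K, IsFolnerInvariant H η K → relDensity S K < c := by
  by_contra hcon
  push Not at hcon
  refine absurd ?_ (not_le.2 hc)
  refine le_csSup ⟨1, ?_⟩ hcon
  rintro a ha
  obtain ⟨K, -, hK⟩ := ha ∅ 1 one_pos
  exact hK.trans (relDensity_le_one S K)

theorem banachDensity_le_one_s6 {G : Type*} [Group G] [DecidableEq G] (S : Set G) :
    banachDensity S ≤ 1 := by
  refine Real.sSup_le ?_ zero_le_one
  rintro a ha
  obtain ⟨K, -, hK⟩ := ha ∅ 1 one_pos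
  exact hK.trans (relDensity_le_one S K)

/-- The Banach density of `A` is attained as a limit along some Følner net. -/
theorem exists_folner_net {G : Type*} [Group G] [DecidableEq G] (hG : IsAmenable G) (A : Set G) :
    ∃ K : Finset G × ℕ → Finset G,
      (∀ (H : Finset G) (η : ℝ), 0 < η → ∀ᶠ j in atTop, IsFolnerInvariant H η (K j)) ∧
      Tendsto (fun j => relDensity A (K j)) atTop (𝓝 (banachDensity A)) := by
  have hex : ∀ j : Finset G × ℕ, ∃ K : Finset G, IsFolnerInvariant j.1 (1 / ((j.2 : ℝ) + 1)) K ∧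
      banachDensity A - 1 / ((j.2 : ℝ) + 1) ≤ relDensity A K := by
    intro j
    have hp : (0 : ℝ) < 1 / ((j.2 : ℝ) + 1) := by positivity
    have hlt : banachDensity A - 1 / ((j.2 : ℝ) + 1) < banachDensity A := by linarith
    obtain ⟨a, ha, hlt'⟩ := exists_lt_of_lt_csSup ⟨0, fun H η hη => by
      obtain ⟨K, hK⟩ := hG H η hη
      exact ⟨K, hK, relDensity_nonneg A K⟩⟩ hlt
    obtain ⟨K, hK, hK'⟩ := ha j.1 _ hp
    exact ⟨K, hK, hlt'.le.trans hK'⟩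
  choose K hK hKA using hex
  have hsnd : Tendsto (fun j : Finset G × ℕ => 1 / ((j.2 : ℝ) + 1)) atTop (𝓝 0) := by
    rw [← prod_atTop_atTop_eq]
    exact tendsto_one_div_add_atTop_nhds_zero_nat.comp tendsto_snd
  have hinv : ∀ (H : Finset G) (η : ℝ), 0 < η →
      ∀ᶠ j in atTop, IsFolnerInvariant H η (K j) := by
    intro H η hη
    filter_upwards [hsnd.eventually_lt_const hη, eventually_ge_atTop ((H, 0) : Finset G × ℕ)]
      with j hj hge
    refine ⟨(hK j).1, fun h hh => ((hK j).2 h (hge.1 hh)).trans_le ?_⟩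
    gcongr
  refine ⟨K, hinv, tendsto_order.2 ⟨fun c hc => ?_, fun c hc => ?_⟩⟩
  · filter_upwards [hsnd.eventually_lt_const (sub_pos.2 hc)] with j hj
    linarith [hKA j]
  · obtain ⟨H, η, hη, hb⟩ := exists_relDensity_lt hc
    filter_upwards [hinv H η hη] with j hj using hb _ hj

/-! ### Separated sets and intersections of translates -/

/-- Cauchy–Schwarz for the number of `a ∈ F` with `x ∈ ∏ i, S a i`, where `x` is uniformly
distributed on the finite box `∏ i, K i`. -/
theorem sq_sum_prod_relDensity_le {G ι : Type*} {n : ℕ} (K : Fin n → Finset G)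
    (hK : ∀ i, (K i).Nonempty) (F : Finset ι) (S : ι → Fin n → Set G) :
    (∑ a ∈ F, ∏ i, relDensity (S a i) (K i)) ^ 2
      ≤ ∑ a ∈ F, ∑ b ∈ F, ∏ i, relDensity (S a i ∩ S b i) (K i) := by
  classical
  set f : ι → (Fin n → G) → ℝ := fun a x => ∏ i, if x i ∈ S a i then (1 : ℝ) else 0
  set T := Fintype.piFinset K
  set N : ℝ := ∏ i, ((K i).card : ℝ)
  have hN : 0 < N := Finset.prod_pos fun i _ => by exact_mod_cast (hK i).card_pos
  have hT : (T.card : ℝ) = N := by simp [T, N, Fintype.card_piFinset]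
  have box : ∀ R : Fin n → Set G, ∑ x ∈ T, ∏ i, (if x i ∈ R i then (1 : ℝ) else 0)
      = (∏ i, relDensity (R i) (K i)) * N := by
    intro R
    rw [← Finset.prod_univ_sum K (fun i y => if y ∈ R i then (1 : ℝ) else 0),
      ← Finset.prod_mul_distrib]
    exact Finset.prod_congr rfl fun i _ => sum_indicator_eq (R i) (hK i)
  have hff : ∀ a b x, f a x * f b x = ∏ i, (if x i ∈ S a i ∩ S b i then (1 : ℝ) else 0) := by
    intro a b x
    simp only [f, ← Finset.prod_mul_distrib]
    refine Finset.prod_congr rfl fun i _ => ?_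
    by_cases h1 : x i ∈ S a i <;> by_cases h2 : x i ∈ S b i <;> simp [h1, h2]
  have h1 : ∑ x ∈ T, ∑ a ∈ F, f a x = (∑ a ∈ F, ∏ i, relDensity (S a i) (K i)) * N := by
    rw [Finset.sum_comm, Finset.sum_mul]
    exact Finset.sum_congr rfl fun a _ => box (S a)
  have h2 : ∑ x ∈ T, (∑ a ∈ F, f a x) ^ 2
      = (∑ a ∈ F, ∑ b ∈ F, ∏ i, relDensity (S a i ∩ S b i) (K i)) * N := by
    simp_rw [sq, Finset.sum_mul_sum, hff]
    rw [Finset.sum_comm, Finset.sum_mul]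
    refine Finset.sum_congr rfl fun a _ => ?_
    rw [Finset.sum_comm, Finset.sum_mul]
    refine Finset.sum_congr rfl fun b _ => ?_
    convert box fun i => S a i ∩ S b i
  have hcs := sq_sum_le_card_mul_sum_sq (s := T) (f := fun x => ∑ a ∈ F, f a x)
  rw [h1, h2, hT] at hcs
  have hN2 : 0 < N ^ 2 := by positivity
  refine le_of_mul_le_mul_right ?_ hN2
  linarith

/-- A finite set whose distinct elements `a`, `b` never satisfy both `a⁻¹b ∈ Δ` and `b⁻¹a ∈ Δ`,
for `Δ` the intersection of the Delta-sets, has, when `ε < β²` with `β = ∏ i, d(A i)`,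
at most `(β - ε) / (β² - ε)` elements. -/
theorem card_le_of_separated {G : Type*} [Group G] [DecidableEq G] (hG : IsAmenable G)
    {n : ℕ} (A : Fin n → Set G) {ε : ℝ}
    (hε : ε < (∏ i, banachDensity (A i)) ^ 2) (F : Finset G)
    (hF : ∀ a ∈ F, ∀ b ∈ F, a ≠ b → a⁻¹ * b ∉ ⋂ i, deltaSet ε (A i) ∨
      b⁻¹ * a ∉ ⋂ i, deltaSet ε (A i)) :
    (F.card : ℝ) ≤ ((∏ i, banachDensity (A i)) - ε) / ((∏ i, banachDensity (A i)) ^ 2 - ε) := by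
  set β := ∏ i, banachDensity (A i) with hβ
  choose K hKinv hKlim using fun i => exists_folner_net hG (A i)
  set S : G → Fin n → Set G := fun a i => (a * ·) '' A i with hS
  have hshift : ∀ i a, Tendsto (fun j => relDensity (S a i) (K i j)) atTop
      (𝓝 (banachDensity (A i))) := by
    intro i a
    have : Tendsto (fun j => relDensity (S a i) (K i j) - relDensity (A i) (K i j)) atTop
        (𝓝 0) := by
      rw [Metric.tendsto_nhds]
      intro η hη
      filter_upwards [hKinv i {a} η hη] with j hj
      rw [Real.dist_eq, sub_zero]
      exact abs_relDensity_translate_sub_lt hj (Finset.mem_singleton_self a) (A i)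
    simpa using this.add (hKlim i)
  have hP : ∀ a, Tendsto (fun j => ∏ i, relDensity (S a i) (K i j)) atTop (𝓝 β) :=
    fun a => tendsto_finsetProd _ fun i _ => hshift i a
  have hpair : ∀ δ : ℝ, 0 < δ → ∀ a b, a⁻¹ * b ∉ ⋂ i, deltaSet ε (A i) →
      ∀ᶠ j in atTop, ∏ i, relDensity (S a i ∩ S b i) (K i j) ≤ ε + δ := by
    intro δ hδ a b hab
    obtain ⟨l, hl⟩ : ∃ l, banachDensity (A l ∩ ((a⁻¹ * b) * ·) '' A l) ≤ ε := by
      simpa [deltaSet] using hab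
    obtain ⟨H, η, hη, hb⟩ := exists_relDensity_lt
      (show banachDensity (A l ∩ ((a⁻¹ * b) * ·) '' A l) < ε + δ / 2 by linarith)
    have himg : S a l ∩ S b l = (a * ·) '' (A l ∩ ((a⁻¹ * b) * ·) '' A l) := by
      rw [Set.image_inter (mul_right_injective a), Set.image_image]
      simp only [hS, mul_assoc, mul_inv_cancel_left]
    filter_upwards [hKinv l H η hη, hKinv l {a} (δ / 2) (by linarith)] with j h1 h2
    have h3 := hb _ h1
    have h4 := abs_lt.1 (abs_relDensity_translate_sub_lt h2 (Finset.mem_singleton_self a)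
      (A l ∩ ((a⁻¹ * b) * ·) '' A l))
    rw [← himg] at h4
    -- A product of numbers in `[0, 1]` is at most any one of its factors.
    have h5 : ∏ i, relDensity (S a i ∩ S b i) (K i j) ≤ relDensity (S a l ∩ S b l) (K l j) := by
      rw [← Finset.mul_prod_erase _ _ (Finset.mem_univ l)]
      exact mul_le_of_le_one_right (relDensity_nonneg _ _)
        (Finset.prod_le_one (fun i _ => relDensity_nonneg _ _) fun i _ => relDensity_le_one _ _)
    linarith [h4.2]
  rcases F.eq_empty_or_nonempty with rfl | hne
  · have hβ0 : 0 ≤ β := Finset.prod_nonneg fun i _ =>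
      ge_of_tendsto (hKlim i) (Eventually.of_forall fun j => relDensity_nonneg _ _)
    have hβ1 : β ≤ 1 := Finset.prod_le_one (fun i _ =>
      ge_of_tendsto (hKlim i) (Eventually.of_forall fun j => relDensity_nonneg _ _))
      fun i _ => banachDensity_le_one_s6 _
    rw [Finset.card_empty, Nat.cast_zero]
    exact div_nonneg (by nlinarith) (by linarith)
  have hk : (0 : ℝ) < F.card := by exact_mod_cast hne.card_pos
  set k : ℝ := (F.card : ℝ) with hkdef
  have hmain : ∀ δ : ℝ, 0 < δ → (k * β) ^ 2 ≤ k * β + k * (k - 1) * (ε + δ) := by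
    intro δ hδ
    have hlim1 : Tendsto (fun j => (∑ a ∈ F, ∏ i, relDensity (S a i) (K i j)) ^ 2) atTop
        (𝓝 ((k * β) ^ 2)) := by
      have := (tendsto_finsetSum F fun a _ => hP a).pow 2
      simpa [hkdef] using this
    have hlim2 : Tendsto (fun j => (∑ a ∈ F, ∏ i, relDensity (S a i) (K i j))
        + k * (k - 1) * (ε + δ)) atTop (𝓝 (k * β + k * (k - 1) * (ε + δ))) := by
      have := (tendsto_finsetSum F fun a _ => hP a).add_const (k * (k - 1) * (ε + δ))
      simpa [hkdef] using this
    refine le_of_tendsto_of_tendsto hlim1 hlim2 ?_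
    have hne' : ∀ᶠ j in atTop, ∀ i, (K i j).Nonempty :=
      eventually_all.2 fun i => (hKinv i ∅ 1 one_pos).mono fun j hj => hj.1
    have hpairs : ∀ᶠ j in atTop, ∀ a ∈ F, ∀ b ∈ F, a ≠ b →
        ∏ i, relDensity (S a i ∩ S b i) (K i j) ≤ ε + δ := by
      refine (eventually_all_finset F).2 fun a ha => (eventually_all_finset F).2 fun b hb => ?_
      by_cases hab : a = b
      · exact Eventually.of_forall fun j h => absurd hab h
      rcases hF a ha b hb hab with h | h
      · exact (hpair δ hδ a b h).mono fun j hj _ => hj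
      · refine (hpair δ hδ b a h).mono fun j hj _ => ?_
        simpa only [Set.inter_comm] using hj
    filter_upwards [hne', hpairs] with j h1 h2
    refine (sq_sum_prod_relDensity_le (fun i => K i j) h1 F S).trans ?_
    have hrow : ∀ a ∈ F, ∑ b ∈ F, ∏ i, relDensity (S a i ∩ S b i) (K i j)
        ≤ ∏ i, relDensity (S a i) (K i j) + (k - 1) * (ε + δ) := by
      intro a ha
      rw [← Finset.add_sum_erase F _ ha]
      have hcard : ((F.erase a).card : ℝ) = k - 1 := by
        rw [Finset.card_erase_of_mem ha, Nat.cast_pred hne.card_pos]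
      have := Finset.sum_le_card_nsmul (F.erase a)
        (fun b => ∏ i, relDensity (S a i ∩ S b i) (K i j)) (ε + δ)
        fun b hb => h2 a ha b (Finset.mem_of_mem_erase hb) (Finset.ne_of_mem_erase hb).symm
      rw [nsmul_eq_mul, hcard] at this
      simpa only [Set.inter_self, add_le_add_iff_left] using this
    refine (Finset.sum_le_sum hrow).trans_eq ?_
    rw [Finset.sum_add_distrib, Finset.sum_const, nsmul_eq_mul]
    ring
  have hlim : (k * β) ^ 2 ≤ k * β + k * (k - 1) * ε := by
    have ht : Tendsto (fun δ : ℝ => k * β + k * (k - 1) * (ε + δ)) (𝓝[>] 0)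
        (𝓝 (k * β + k * (k - 1) * (ε + 0))) :=
      (Continuous.tendsto (by fun_prop) 0).mono_left nhdsWithin_le_nhds
    rw [add_zero] at ht
    exact ge_of_tendsto ht (eventually_mem_nhdsWithin.mono fun δ hδ => hmain δ hδ)
  rw [le_div_iff₀ (by linarith)]
  refine le_of_mul_le_mul_left ?_ hk
  linarith

/-! ### Syndetic sets -/

/-- An `r`-syndetic set has lower Banach density at least `1 / r`. -/
theorem one_div_le_lowerBanachDensity {G : Type*} [Group G] [DecidableEq G] (hG : IsAmenable G)
    {r : ℕ} {S : Set G} (hS : IsSyndetic r S) : 1 / (r : ℝ) ≤ lowerBanachDensity S := by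
  classical
  obtain ⟨F, hFr, hF⟩ := hS
  have hr : (0 : ℝ) < r := by
    obtain ⟨f, hf, -⟩ := hF 1
    exact_mod_cast (Finset.card_pos.2 ⟨f, hf⟩).trans_le hFr
  refine le_of_forall_sub_le fun η hη => le_csSup ⟨1, ?_⟩ ⟨F, η, hη, fun K hK => ?_⟩
  · rintro a ⟨H, δ, hδ, ha⟩
    obtain ⟨K, hK⟩ := hG H δ hδ
    exact (ha K hK).trans (relDensity_le_one S K)
  change 1 / (r : ℝ) - η ≤ relDensity S K
  have h0 : (0 : ℝ) < K.card := by exact_mod_cast hK.1.card_pos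
  -- The translates `fS`, `f ∈ F`, cover `K`, and each has density less than `relDensity S K + η`.
  have h1 : 1 ≤ ∑ f ∈ F, relDensity ((f * ·) '' S) K := by
    refine le_of_mul_le_mul_right ?_ h0
    rw [one_mul, Finset.sum_mul]
    simp_rw [← sum_indicator_eq _ hK.1]
    rw [Finset.sum_comm, Finset.card_eq_sum_ones, Nat.cast_sum]
    refine Finset.sum_le_sum fun x _ => ?_
    obtain ⟨f, hf, s, hs, hx⟩ := hF x
    refine le_trans ?_ (Finset.single_le_sum (f := fun g =>
      if x ∈ (g * ·) '' S then (1 : ℝ) else 0) (fun g _ => by positivity) hf)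
    simp only [Nat.cast_one]
    rw [if_pos ⟨s, hs, hx⟩]
  have h2 : ∑ f ∈ F, relDensity ((f * ·) '' S) K ≤ F.card * (relDensity S K + η) := by
    rw [← nsmul_eq_mul]
    refine Finset.sum_le_card_nsmul _ _ _ fun f hf => ?_
    linarith [(abs_lt.1 (abs_relDensity_translate_sub_lt hK hf S)).2]
  have h3 : (F.card : ℝ) * (relDensity S K + η) ≤ r * (relDensity S K + η) := by
    have := relDensity_nonneg S K
    gcongr
  rw [sub_le_iff_le_add, div_le_iff₀ hr]
  linarith

/-- Corollary 3.2. Under the hypotheses of Theorem 3.1, `Δ_ε(A_1) ∩ ⋯ ∩ Δ_ε(A_n)` is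
`r`-syndetic with `r = ⌊(β − ε)/(β² − ε)⌋`, and its lower Banach density is at least `1/r`. -/
theorem stmt6 {G : Type*} [Group G] [DecidableEq G] (hG : IsAmenable G)
    (n : ℕ) (A : Fin n → Set G) (α : Fin n → ℝ)
    (hpos : ∀ i, 0 < α i) (hd : ∀ i, banachDensity (A i) = α i)
    (ε : ℝ) (hε0 : 0 ≤ ε) (hε : ε < (∏ i, α i) ^ 2) :
    IsSyndetic ⌊((∏ i, α i) - ε) / ((∏ i, α i) ^ 2 - ε)⌋₊ (⋂ i, deltaSet ε (A i)) ∧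
      1 / (⌊((∏ i, α i) - ε) / ((∏ i, α i) ^ 2 - ε)⌋₊ : ℝ)
        ≤ lowerBanachDensity (⋂ i, deltaSet ε (A i)) := by
  obtain rfl : α = fun i => banachDensity (A i) := funext fun i => (hd i).symm
  set β := ∏ i, banachDensity (A i) with hβ
  set Δ := ⋂ i, deltaSet ε (A i) with hΔ
  set r := ⌊(β - ε) / (β ^ 2 - ε)⌋₊ with hr
  suffices hsyn : IsSyndetic r Δ from ⟨hsyn, one_div_le_lowerBanachDensity hG hsyn⟩
  have hβ0 : 0 < β := Finset.prod_pos fun i _ => hpos i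
  have hβ1 : β ≤ 1 := Finset.prod_le_one (fun i _ => (hpos i).le) fun i _ => banachDensity_le_one_s6 _
  have hone : (1 : G) ∈ Δ := by
    refine Set.mem_iInter.2 fun i => ?_
    have hle : β ≤ banachDensity (A i) := by
      rw [hβ, ← Finset.mul_prod_erase _ _ (Finset.mem_univ i)]
      exact mul_le_of_le_one_right (hpos i).le
        (Finset.prod_le_one (fun j _ => (hpos j).le) fun j _ => banachDensity_le_one_s6 _)
    simp only [deltaSet, Set.mem_ofPred_eq, one_mul, Set.image_id', Set.inter_self]
    nlinarith
  let P : Finset G → Prop := fun F => ∀ a ∈ F, ∀ b ∈ F, a ≠ b → a⁻¹ * b ∉ Δ ∨ b⁻¹ * a ∉ Δ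
  have hbound : ∀ F, P F → F.card ≤ r := fun F hF =>
    Nat.le_floor (card_le_of_separated hG A hε F hF)
  -- A separated set of the largest possible cardinality.
  obtain ⟨F, hF, hmax⟩ : ∃ F, P F ∧ ∀ F', P F' → F'.card ≤ F.card := by
    have hfin : {k | ∃ F, P F ∧ F.card = k}.Finite :=
      (Set.finite_Iic r).subset (by rintro k ⟨F, hF, rfl⟩; exact hbound F hF)
    obtain ⟨k, ⟨F, hF, rfl⟩, hk⟩ :=
      hfin.exists_maximal ⟨0, ∅, by simp [P], Finset.card_empty⟩
    refine ⟨F, hF, fun F' hF' => ?_⟩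
    by_contra! hlt
    exact absurd (hk ⟨F', hF', rfl⟩ hlt.le) (not_le.2 hlt)
  refine ⟨F, hbound F hF, fun g => ?_⟩
  by_contra hg
  have hg' : ∀ f ∈ F, f⁻¹ * g ∉ Δ := fun f hf h =>
    hg ⟨f, hf, f⁻¹ * g, h, mul_inv_cancel_left f g⟩
  have hgF : g ∉ F := fun h => hg' g h (by rwa [inv_mul_cancel])
  have hins : P (insert g F) := by
    intro a ha b hb hab
    rcases Finset.mem_insert.1 ha with rfl | ha' <;> rcases Finset.mem_insert.1 hb with rfl | hb'
    · exact absurd rfl hab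
    · exact Or.inr (hg' b hb')
    · exact Or.inl (hg' a ha')
    · exact hF a ha' b hb' hab
  have := hmax _ hins
  rw [Finset.card_insert_of_notMem hgF] at this
  omega
end

section
/- Let G be an amenable group, let X ⊆ G be infinite, let w ∈ X, and let A, B ⊆ G have positive Banach densities d(A) = α and d(B) = β. Then there exists a finite set F ⊆ X such that w ∈ F, |F| ≤ 1/(αβ), and X is finitely embeddable in FAB (i.e., X ◁ FAB). -/
/-!
The sets `D = A ∩ x B⁻¹` carry the argument. Given a finite `H`, let `V` be an almost
`H`-invariant set in which `A` has density about `α`, and `U` an almost `(A ∩ V)⁻¹`-invariant set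
in which `B` has density about `β`. Averaging `|A ∩ V ∩ x B⁻¹|` over `x ∈ U` produces an `x` for
which `D = A ∩ V ∩ x B⁻¹` has at least about `αβ|V|` elements (`exists_translate_inter`). Since the
translates `f D` with `f ∈ H` stay almost inside `V`, at most `1/(αβ)` of them can be pairwise
disjoint (`exists_witness`). On the other hand, if `f D` meets `h D`, say `f d = h d'`, then
`h x = f d (d'⁻¹ x) ∈ f A B`.

The set `D` depends on `H`, whereas `F` may not. So the relation "`f D_H` meets `h D_H`" is passed
to its limit along an ultrafilter on the finite subsets of `G` that refines `atTop`. A subset of `X`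
containing `w`, pairwise unrelated for the limit relation and of maximal size, is the required `F`.
-/

open scoped Pointwise symmDiff

variable {G : Type*}

open Classical in
/-- The supremum defining the Banach density is approximated: almost invariant sets `K` exist on
which `A` has density at least `α - δ`. -/
lemma exists_folner_of_banachDensity [Group G] [DecidableEq G] {A : Set G} {α δ : ℝ}
    (hα : 0 < α) (hA : banachDensity A = α) (hδ : 0 < δ) (H : Finset G) {ε : ℝ} (hε : 0 < ε) :
    ∃ K : Finset G, IsFolnerInvariant H ε K ∧
      (α - δ) * K.card ≤ (K.filter (· ∈ A)).card := by
  unfold banachDensity at hA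
  set S := {α : ℝ | ∀ (H : Finset G) (ε : ℝ), 0 < ε →
    ∃ K : Finset G, IsFolnerInvariant H ε K ∧ α ≤ ((A ∩ ↑K).ncard : ℝ) / K.card}
  -- An empty set has junk supremum `0`, contradicting `0 < α`.
  have hne : S.Nonempty := by
    by_contra h
    rw [Set.not_nonempty_iff_eq_empty.mp h, Real.sSup_empty] at hA
    exact hα.ne hA
  obtain ⟨a, haS, ha⟩ := exists_lt_of_lt_csSup hne (show α - δ < sSup S by linarith)
  obtain ⟨K, hK, hKa⟩ := haS H ε hε
  refine ⟨K, hK, ?_⟩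
  have hcard : (0 : ℝ) < K.card := by exact_mod_cast hK.1.card_pos
  have heq : A ∩ (K : Set G) = ((K.filter (· ∈ A) : Finset G) : Set G) := by
    ext; simp [and_comm]
  rw [heq, Set.ncard_coe_finset, le_div_iff₀ hcard] at hKa
  exact (mul_le_mul_of_nonneg_right ha.le hcard.le).trans hKa

open Classical in
/-- Averaging over `x` in an almost `V⁻¹`-invariant set: some `x` satisfies
`|V ∩ x B⁻¹| ≥ (β - 2ε) |V|`. -/
lemma exists_translate_inter [Group G] [DecidableEq G] {B : Set G} {β ε : ℝ}
    (hβ : 0 < β) (hB : banachDensity B = β) (hε : 0 < ε) (V : Finset G) :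
    ∃ x : G, (β - 2 * ε) * V.card ≤ (V.filter (fun a => a⁻¹ * x ∈ B)).card := by
  obtain ⟨U, ⟨hUne, hU⟩, hUB⟩ := exists_folner_of_banachDensity hβ hB hε (V.image (·⁻¹)) hε
  have key : ∀ a ∈ V, (β - 2 * ε) * U.card ≤
      ((U.filter (fun x => a⁻¹ * x ∈ B)).card : ℝ) := by
    intro a ha
    have h1 := hU a⁻¹ (Finset.mem_image_of_mem _ ha)
    have h2 : (U.filter (· ∈ B)).card ≤
        (U.filter (fun x => a⁻¹ * x ∈ B)).card + ((U.image (a⁻¹ * ·)) ∆ U).card := by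
      rw [← Finset.card_image_of_injective (U.filter (fun x => a⁻¹ * x ∈ B))
        (mul_right_injective a⁻¹)]
      refine (Finset.card_le_card ?_).trans (Finset.card_union_le _ _)
      intro u hu
      rw [Finset.mem_filter] at hu
      rw [Finset.mem_union, Finset.mem_symmDiff]
      by_cases h : u ∈ U.image (a⁻¹ * ·)
      · left
        obtain ⟨v, hv, rfl⟩ := Finset.mem_image.mp h
        exact Finset.mem_image_of_mem _ (Finset.mem_filter.mpr ⟨hv, hu.2⟩)
      · exact Or.inr (Or.inr ⟨hu.1, h⟩)
    have h3 : ((U.filter (· ∈ B)).card : ℝ) ≤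
        (U.filter (fun x => a⁻¹ * x ∈ B)).card + ((U.image (a⁻¹ * ·)) ∆ U).card := by
      exact_mod_cast h2
    linarith
  -- Double counting of the pairs `(a, x) ∈ V × U` with `a⁻¹ x ∈ B`.
  have hdc : ∑ a ∈ V, ((U.filter (fun x => a⁻¹ * x ∈ B)).card : ℝ) =
      ∑ x ∈ U, ((V.filter (fun a => a⁻¹ * x ∈ B)).card : ℝ) := by
    exact_mod_cast Finset.sum_card_bipartiteAbove_eq_sum_card_bipartiteBelow
      (s := V) (t := U) (fun a x => a⁻¹ * x ∈ B)
  obtain ⟨x, -, hx⟩ := Finset.exists_le_of_sum_le (s := U) hUne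
    (f := fun _ => (β - 2 * ε) * (V.card : ℝ))
    (g := fun x => ((V.filter (fun a => a⁻¹ * x ∈ B)).card : ℝ)) (by
      rw [← hdc]
      refine le_trans (le_of_eq ?_) (Finset.sum_le_sum key)
      simp only [Finset.sum_const, nsmul_eq_mul]
      ring)
  exact ⟨x, hx⟩

/-- The error `ε` can be chosen so small that the approximate inequality
`n (α - ε)(β - 2ε) ≤ 1 + Nε` forces the exact one `n ≤ 1/(αβ)` for all integers `n ≤ N`. -/
lemma exists_small_error {α β : ℝ} (hα : 0 < α) (hβ : 0 < β) (N : ℕ) :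
    ∃ ε : ℝ, 0 < ε ∧ ε < α ∧ 2 * ε < β ∧
      ∀ n ∈ Finset.range (N + 1), n * ((α - ε) * (β - 2 * ε)) ≤ 1 + N * ε →
        (n : ℝ) ≤ 1 / (α * β) := by
  have hcont : ∀ f : ℝ → ℝ, Continuous f → 0 < f 0 →
      ∀ᶠ ε in nhdsWithin (0 : ℝ) (Set.Ioi 0), 0 < f ε := fun f hf h0 =>
    nhdsWithin_le_nhds (hf.continuousAt.eventually (lt_mem_nhds h0))
  have h1 : ∀ᶠ ε in nhdsWithin (0 : ℝ) (Set.Ioi 0), 0 < α - ε :=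
    hcont _ (by fun_prop) (by simpa)
  have h2 : ∀ᶠ ε in nhdsWithin (0 : ℝ) (Set.Ioi 0), 0 < β - 2 * ε :=
    hcont _ (by fun_prop) (by simpa)
  have h3 : ∀ᶠ ε in nhdsWithin (0 : ℝ) (Set.Ioi 0), ∀ n ∈ Finset.range (N + 1),
      n * ((α - ε) * (β - 2 * ε)) ≤ 1 + N * ε → (n : ℝ) ≤ 1 / (α * β) := by
    rw [Filter.eventually_all_finset]
    intro n _
    by_cases hn : (n : ℝ) ≤ 1 / (α * β)
    · exact Filter.Eventually.of_forall fun _ _ => hn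
    · have hn' : 1 < n * (α * β) := by
        rwa [not_le, div_lt_iff₀ (mul_pos hα hβ)] at hn
      have := hcont (fun ε => n * ((α - ε) * (β - 2 * ε)) - (1 + N * ε)) (by fun_prop)
        (by simpa using hn')
      filter_upwards [this] with ε hε hle
      linarith
  have h0 : ∀ᶠ ε in nhdsWithin (0 : ℝ) (Set.Ioi 0), 0 < ε := self_mem_nhdsWithin
  obtain ⟨ε, e0, e1, e2, e3⟩ := (h0.and (h1.and (h2.and h3))).exists
  exact ⟨ε, e0, by linarith, by linarith, e3⟩

open Classical in
/-- For each finite `H` there is a nonempty finite `D ⊆ A ∩ x B⁻¹` of which at most `1/(αβ)`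
translates by elements of `H` are pairwise disjoint. -/
lemma exists_witness [Group G] [DecidableEq G] {A B : Set G} {α β : ℝ}
    (hα : 0 < α) (hβ : 0 < β) (hA : banachDensity A = α) (hB : banachDensity B = β)
    (H : Finset G) :
    ∃ (D : Finset G) (x : G), D.Nonempty ∧ (∀ d ∈ D, d ∈ A) ∧ (∀ d ∈ D, d⁻¹ * x ∈ B) ∧
      ∀ S ⊆ H, (∀ f ∈ S, ∀ h ∈ S, f ≠ h → Disjoint (D.image (f * ·)) (D.image (h * ·))) →
        (S.card : ℝ) ≤ 1 / (α * β) := by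
  obtain ⟨ε, hε, hεα, hεβ, hlim⟩ := exists_small_error hα hβ H.card
  obtain ⟨V, ⟨hVne, hV⟩, hVA⟩ := exists_folner_of_banachDensity hα hA hε H hε
  obtain ⟨x, hx⟩ := exists_translate_inter hβ hB hε (V.filter (· ∈ A))
  set D := (V.filter (· ∈ A)).filter (fun a => a⁻¹ * x ∈ B) with hD
  have hVpos : (0 : ℝ) < V.card := by exact_mod_cast hVne.card_pos
  have hDcard : (α - ε) * (β - 2 * ε) * V.card ≤ D.card := by
    have := mul_le_mul_of_nonneg_left hVA (show 0 ≤ β - 2 * ε by linarith)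
    linarith
  have hpos : 0 < (α - ε) * (β - 2 * ε) := mul_pos (by linarith) (by linarith)
  refine ⟨D, x, ?_, ?_, ?_, ?_⟩
  · rw [← Finset.card_pos]
    exact_mod_cast (mul_pos hpos hVpos).trans_le hDcard
  · intro d hd
    exact (Finset.mem_filter.mp (Finset.mem_filter.mp hd).1).2
  · intro d hd
    exact (Finset.mem_filter.mp hd).2
  · intro S hSH hdisj
    have hSc : S.card ≤ H.card := Finset.card_le_card hSH
    refine hlim S.card (Finset.mem_range.mpr (by omega)) ?_
    have hunion : (S.biUnion fun f => D.image (f * ·)).card = S.card * D.card := by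
      rw [Finset.card_biUnion hdisj, Finset.sum_const_nat]
      intro f _
      exact Finset.card_image_of_injective _ (mul_right_injective f)
    -- The translates of `D ⊆ V` leave `V` only inside the small sets `fV ∆ V`.
    have hsub : (S.biUnion fun f => D.image (f * ·)) ⊆
        V ∪ S.biUnion fun f => (V.image (f * ·)) ∆ V := by
      intro y hy
      obtain ⟨f, hf, hy⟩ := Finset.mem_biUnion.mp hy
      obtain ⟨d, hd, rfl⟩ := Finset.mem_image.mp hy
      by_cases h : f * d ∈ V
      · exact Finset.mem_union_left _ h
      · refine Finset.mem_union_right _ (Finset.mem_biUnion.mpr ⟨f, hf, ?_⟩)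
        rw [Finset.mem_symmDiff]
        exact Or.inl ⟨Finset.mem_image_of_mem _
          (Finset.mem_filter.mp (Finset.mem_filter.mp hd).1).1, h⟩
    have hle : S.card * D.card ≤ V.card + ∑ f ∈ S, ((V.image (f * ·)) ∆ V).card := by
      rw [← hunion]
      exact (Finset.card_le_card hsub).trans ((Finset.card_union_le _ _).trans
        (Nat.add_le_add_left Finset.card_biUnion_le _))
    have hle' : (S.card : ℝ) * D.card ≤
        V.card + ∑ f ∈ S, (((V.image (f * ·)) ∆ V).card : ℝ) := by exact_mod_cast hle
    have hsum : ∑ f ∈ S, (((V.image (f * ·)) ∆ V).card : ℝ) ≤ S.card * (ε * V.card) := by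
      rw [← nsmul_eq_mul]
      exact Finset.sum_le_card_nsmul _ _ _ fun f hf => (hV f (hSH hf)).le
    have hSH' : (S.card : ℝ) * (ε * V.card) ≤ H.card * (ε * V.card) :=
      mul_le_mul_of_nonneg_right (by exact_mod_cast hSc) (by positivity)
    have hSD : (S.card : ℝ) * ((α - ε) * (β - 2 * ε) * V.card) ≤ S.card * D.card :=
      mul_le_mul_of_nonneg_left hDcard (by positivity)
    refine le_of_mul_le_mul_right ?_ hVpos
    linarith

/-- Theorem 3.4 (Jin's theorem with a bound). If `X ⊆ G` is infinite, `w ∈ X`, and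
`d(A) = α > 0`, `d(B) = β > 0`, then there is a finite `F ⊆ X` with `w ∈ F`,
`|F| ≤ 1/(αβ)` and `X ◁ FAB`. -/
theorem stmt8 {G : Type*} [Group G] [DecidableEq G] (hG : IsAmenable G)
    (X : Set G) (hX : X.Infinite) (w : G) (hw : w ∈ X)
    (A B : Set G) (α β : ℝ) (hα : 0 < α) (hβ : 0 < β)
    (hdA : banachDensity A = α) (hdB : banachDensity B = β) :
    ∃ F : Finset G, ↑F ⊆ X ∧ w ∈ F ∧ (F.card : ℝ) ≤ 1 / (α * β) ∧
      FinEmbeddable X ((↑F : Set G) * A * B) := by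
  classical
  choose D x hDne hDA hDB hDS using exists_witness hα hβ hdA hdB
  let 𝒰 : Ultrafilter (Finset G) := Ultrafilter.of Filter.atTop
  have h𝒰 : ∀ S : Finset G, ∀ᶠ H in (𝒰 : Filter (Finset G)), S ⊆ H := fun S =>
    Ultrafilter.of_le _ (Filter.eventually_ge_atTop S)
  -- `P f h` is the limit of the relations "`f D_H` meets `h D_H`".
  let P : G → G → Prop := fun f h => ∀ᶠ H in (𝒰 : Filter (Finset G)),
    ¬ Disjoint ((D H).image (f * ·)) ((D H).image (h * ·))
  have hPrefl : ∀ f, P f f := fun f => Filter.Eventually.of_forall fun H hd =>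
    ((hDne H).image (f * ·)).ne_empty (disjoint_self.mp hd)
  have hPsymm : ∀ f h, P f h → P h f := fun f h hfh =>
    Filter.Eventually.mono hfh fun H hH hd => hH hd.symm
  let good : Finset G → Prop := fun F =>
    ↑F ⊆ X ∧ w ∈ F ∧ ∀ f ∈ F, ∀ h ∈ F, f ≠ h → ¬ P f h
  have hbound : ∀ F, good F → (F.card : ℝ) ≤ 1 / (α * β) := by
    rintro F ⟨-, -, hF⟩
    -- For an ultrafilter, failure of `P f h` means that `f D_H` and `h D_H` are eventually disjoint.
    have hev : ∀ᶠ H in (𝒰 : Filter (Finset G)), ∀ f ∈ F, ∀ h ∈ F, f ≠ h →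
        Disjoint ((D H).image (f * ·)) ((D H).image (h * ·)) := by
      rw [Filter.eventually_all_finset]
      intro f hf
      rw [Filter.eventually_all_finset]
      intro h hh
      by_cases hne : f = h
      · exact Filter.Eventually.of_forall fun _ h' => absurd hne h'
      · have := Ultrafilter.eventually_not.mpr (hF f hf h hh hne)
        exact this.mono fun H hH _ => not_not.mp hH
    obtain ⟨H, hFH, hH⟩ := ((h𝒰 F).and hev).exists
    exact hDS H F hFH hH
  obtain ⟨F, hF, hmax⟩ : ∃ F, good F ∧ ∀ F', good F' → F'.card ≤ F.card := by
    let N : Set ℕ := {n | ∃ F, good F ∧ F.card = n}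
    have hne : N.Nonempty := ⟨_, {w}, ⟨by simpa using hw, by simp, by
      intro f hf h hh hne
      rw [Finset.mem_singleton] at hf hh
      exact absurd (hf.trans hh.symm) hne⟩, rfl⟩
    have hbdd : BddAbove N := ⟨⌊1 / (α * β)⌋₊, by
      rintro n ⟨F, hF, rfl⟩
      exact Nat.le_floor (hbound F hF)⟩
    obtain ⟨F, hF, hFc⟩ := Nat.sSup_mem hne hbdd
    exact ⟨F, hF, fun F' hF' => hFc ▸ le_csSup hbdd ⟨F', hF', rfl⟩⟩
  have hcover : ∀ h ∈ X, ∃ f ∈ F, P f h := by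
    intro h hhX
    by_contra! hcon
    have hhF : h ∉ F := fun hh => hcon h hh (hPrefl h)
    have hgood : good (insert h F) := by
      refine ⟨?_, Finset.mem_insert_of_mem hF.2.1, ?_⟩
      · rw [Finset.coe_insert]
        exact Set.insert_subset hhX hF.1
      · intro a ha b hb hab
        rcases Finset.mem_insert.mp ha with rfl | ha'
        · rcases Finset.mem_insert.mp hb with rfl | hb'
          · exact absurd rfl hab
          · exact fun hP => hcon b hb' (hPsymm _ _ hP)
        · rcases Finset.mem_insert.mp hb with rfl | hb'
          · exact hcon a ha'
          · exact hF.2.2 a ha' b hb' hab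
    have := hmax _ hgood
    rw [Finset.card_insert_of_notMem hhF] at this
    omega
  refine ⟨F, hF.1, hF.2.1, hbound F hF, ?_⟩
  intro K hK
  have hev : ∀ᶠ H in (𝒰 : Filter (Finset G)), ∀ h ∈ K, ∃ f ∈ F,
      ¬ Disjoint ((D H).image (f * ·)) ((D H).image (h * ·)) := by
    rw [Filter.eventually_all_finset]
    intro h hh
    obtain ⟨f, hf, hP⟩ := hcover h (hK hh)
    exact Filter.Eventually.mono hP fun H hH => ⟨f, hf, hH⟩
  obtain ⟨H, hH⟩ := hev.exists
  refine ⟨x H, fun h hh => ?_⟩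
  obtain ⟨f, hf, hnd⟩ := hH h hh
  obtain ⟨y, hy1, hy2⟩ := Finset.not_disjoint_iff.mp hnd
  obtain ⟨d, hd, rfl⟩ := Finset.mem_image.mp hy1
  obtain ⟨d', hd', heq⟩ := Finset.mem_image.mp hy2
  have heq' : h * d' = f * d := heq
  have hfac : h * x H = f * d * (d'⁻¹ * x H) := by
    rw [← heq']
    group
  rw [hfac]
  exact Set.mul_mem_mul (Set.mul_mem_mul hf (hDA H d hd)) (hDB H d' hd')
end

section
/- Let G be an amenable group and let A, B ⊆ G have positive Banach densities d(A) = α and d(B) = β. Then the product set AB is piecewise k-syndetic, where k = ⌊1/(αβ)⌋. -/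
/-!
The proof combines an averaging argument with a packing argument. Since
`∑_{t ∈ K} |{a ∈ A ∩ E : a⁻¹ t ∈ B}| = ∑_{a ∈ A ∩ E} |K ∩ aB|`, and each summand on the right is
nearly `d(B) |K|` when `K` is sufficiently invariant, some `t` makes `C = A ∩ t B⁻¹ ∩ E` of
relative density at least about `d(A) d(B)` in a Følner set `E` (`exists_dense_inter`). For such
`C` one has `C C⁻¹ t ⊆ A B`, and at most `1 / (d(A) d(B))` translates of `C` can be pairwise
disjoint, because almost all of each one lies in `E` (`card_mul_le_one`).

The sets `C` and the points `t` depend on the invariance demanded of `E`. An ultrafilter refining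
`Filter.atTop` on the pairs (finite set, precision) turns the difference sets `C C⁻¹` into one
set `S ⊆ G`; a largest `F` whose points have no difference `f⁻¹ f'` in `S` has at most
`⌊1 / (d(A) d(B))⌋` elements and satisfies `F S = G`. For finite `H`, almost every index then
gives `H ⊆ F C C⁻¹`, hence `H t ⊆ F A B`, so `F A B` is thick.
-/


open scoped Pointwise symmDiff

variable {G : Type*}

/-- A density below `d(A)` is realised on arbitrarily invariant finite sets. Positivity of `d(A)`
rules out the junk value `sSup ∅ = 0`. -/
lemma exists_folner_of_lt [Group G] [DecidableEq G] {A : Set G} {γ : ℝ}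
    (hA : 0 < banachDensity A) (hγ : γ < banachDensity A) (H : Finset G) {ε : ℝ} (hε : 0 < ε) :
    ∃ K : Finset G, IsFolnerInvariant H ε K ∧ γ * K.card ≤ ((A ∩ ↑K).ncard : ℝ) := by
  unfold banachDensity at hA hγ
  obtain ⟨a, ha, hlt⟩ := exists_lt_of_lt_csSup (by
    by_contra h
    rw [Set.not_nonempty_iff_eq_empty] at h
    rw [h, Real.sSup_empty] at hA
    exact lt_irrefl _ hA) hγ
  obtain ⟨K, hK, h⟩ := ha H ε hε
  refine ⟨K, hK, ?_⟩
  have hpos : (0 : ℝ) < K.card := by exact_mod_cast hK.1.card_pos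
  rw [le_div_iff₀ hpos] at h
  nlinarith

/-- Translating a subset `C` of an almost invariant set `E` by `h` keeps almost all of `C`
inside `E`. -/
lemma card_sub_le_card_translate [Group G] [DecidableEq G] {H E C : Finset G} {ε : ℝ}
    (hE : IsFolnerInvariant H ε E) (hC : C ⊆ E) {h : G} (hh : h ∈ H) :
    (C.card : ℝ) - ε * E.card ≤ ((C.image (h * ·) ∩ E).card : ℝ) := by
  have h1 := hE.2 h hh
  have h2 : C.image (h * ·) ⊆ (C.image (h * ·) ∩ E) ∪ ((E.image (h * ·)) ∆ E) := by
    intro x hx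
    by_cases hxE : x ∈ E
    · exact Finset.mem_union_left _ (Finset.mem_inter.2 ⟨hx, hxE⟩)
    · exact Finset.mem_union_right _
        (Finset.mem_symmDiff.2 (Or.inl ⟨Finset.image_subset_image hC hx, hxE⟩))
  have h3 := (Finset.card_le_card h2).trans (Finset.card_union_le _ _)
  rw [Finset.card_image_of_injective _ (mul_right_injective h)] at h3
  have h4 : (C.card : ℝ) ≤ (C.image (h * ·) ∩ E).card + ((E.image (h * ·)) ∆ E).card := by
    exact_mod_cast h3
  linarith

/-- Averaging over translates: some `t` makes `A ∩ t B⁻¹` of relative density at least about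
`d(A) d(B)` on some `(H, ε)`-invariant set `E`. -/
lemma exists_dense_inter [Group G] [DecidableEq G] (A B : Set G)
    (hA : 0 < banachDensity A) (hB : 0 < banachDensity B)
    (H : Finset G) {ε : ℝ} (hε : 0 < ε) :
    ∃ (E C : Finset G) (t : G), IsFolnerInvariant H ε E ∧ C ⊆ E ∧
      (∀ c ∈ C, c ∈ A ∧ c⁻¹ * t ∈ B) ∧
      (banachDensity A * banachDensity B - ε) * E.card ≤ C.card := by
  classical
  set α := banachDensity A
  set β := banachDensity B
  -- The losses below add up to at most `η * β + 2 * η`.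
  obtain ⟨η, hη, hηε⟩ : ∃ η : ℝ, 0 < η ∧ η * β + 2 * η = ε :=
    ⟨ε / (β + 2), by positivity, by field_simp⟩
  obtain ⟨E, hE, hAE⟩ := exists_folner_of_lt hA (show α - η < α by linarith) H hε
  obtain ⟨K, hK, hBK⟩ := exists_folner_of_lt hB (show β - η < β by linarith) E hη
  have e1 : A ∩ ↑E = ↑(E.filter (· ∈ A)) := by ext; simp [and_comm]
  have e2 : B ∩ ↑K = ↑(K.filter (· ∈ B)) := by ext; simp [and_comm]
  rw [e1, Set.ncard_coe_finset] at hAE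
  rw [e2, Set.ncard_coe_finset] at hBK
  set A' := E.filter (· ∈ A)
  set B' := K.filter (· ∈ B)
  have hA'E : (A'.card : ℝ) ≤ E.card := by exact_mod_cast Finset.card_filter_le _ _
  have hpos : (0 : ℝ) < K.card := by exact_mod_cast hK.1.card_pos
  have hcount : ∀ a ∈ A', (β - 2 * η) * K.card ≤ ((K.filter (a⁻¹ * · ∈ B)).card : ℝ) := by
    intro a ha
    have h1 := card_sub_le_card_translate hK (Finset.filter_subset (· ∈ B) K)
      (Finset.mem_filter.1 ha).1
    have h2 : B'.image (a * ·) ∩ K ⊆ K.filter (a⁻¹ * · ∈ B) := by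
      intro x hx
      obtain ⟨hx, hxK⟩ := Finset.mem_inter.1 hx
      obtain ⟨b, hb, rfl⟩ := Finset.mem_image.1 hx
      simp only [Finset.mem_filter]
      exact ⟨hxK, by simpa using (Finset.mem_filter.1 hb).2⟩
    have h3 : ((B'.image (a * ·) ∩ K).card : ℝ) ≤ (K.filter (a⁻¹ * · ∈ B)).card := by
      exact_mod_cast Finset.card_le_card h2
    linarith
  have hdouble : ∑ a ∈ A', ((K.filter (a⁻¹ * · ∈ B)).card : ℝ)
      = ∑ t ∈ K, ((A'.filter (fun a => a⁻¹ * t ∈ B)).card : ℝ) := by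
    exact_mod_cast Finset.sum_card_bipartiteAbove_eq_sum_card_bipartiteBelow
      (fun a t => a⁻¹ * t ∈ B)
  have hsum : ∑ t ∈ K, ((β - 2 * η) * A'.card)
      ≤ ∑ t ∈ K, ((A'.filter (fun a => a⁻¹ * t ∈ B)).card : ℝ) := by
    rw [← hdouble]
    refine le_trans (le_of_eq ?_) (Finset.sum_le_sum hcount)
    simp only [Finset.sum_const, nsmul_eq_mul]
    ring
  obtain ⟨t, -, ht⟩ := Finset.exists_le_of_sum_le hK.1 hsum
  refine ⟨E, A'.filter (fun a => a⁻¹ * t ∈ B), t, hE,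
    (Finset.filter_subset _ _).trans (Finset.filter_subset _ _), ?_, ?_⟩
  · intro c hc
    simp only [A', Finset.mem_filter] at hc
    exact ⟨hc.1.2, hc.2⟩
  · rw [← hηε]
    nlinarith [mul_le_mul_of_nonneg_left hAE hB.le, mul_le_mul_of_nonneg_left hA'E hη.le]

/-- Packing bound: pairwise disjoint translates of a dense subset of an almost invariant set are
few, since almost all of each translate lies in that set. -/
lemma card_mul_le_one [Group G] [DecidableEq G] {H E C F : Finset G} {γ ε : ℝ}
    (hE : IsFolnerInvariant H ε E) (hC : C ⊆ E) (hF : F ⊆ H)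
    (hγ : (γ - ε) * E.card ≤ C.card)
    (hdisj : ∀ f ∈ F, ∀ f' ∈ F, f ≠ f' → ∀ c ∈ C, ∀ c' ∈ C, f * c ≠ f' * c') :
    F.card * (γ - 2 * ε) ≤ 1 := by
  have hpos : (0 : ℝ) < E.card := by exact_mod_cast hE.1.card_pos
  have h1 : ∑ f ∈ F, (C.image (f * ·) ∩ E).card ≤ E.card := by
    rw [← Finset.card_biUnion]
    · exact Finset.card_le_card (Finset.biUnion_subset.2 fun f _ => Finset.inter_subset_right)
    · intro f hf f' hf' hne
      refine Finset.disjoint_left.2 fun x hx hx' => ?_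
      obtain ⟨c, hc, rfl⟩ := Finset.mem_image.1 (Finset.mem_inter.1 hx).1
      obtain ⟨c', hc', h⟩ := Finset.mem_image.1 (Finset.mem_inter.1 hx').1
      exact hdisj f hf f' hf' hne c hc c' hc' h.symm
  have h2 : ∑ f ∈ F, ((γ - 2 * ε) * E.card) ≤ ∑ f ∈ F, ((C.image (f * ·) ∩ E).card : ℝ) :=
    Finset.sum_le_sum fun f hf => by
      have := card_sub_le_card_translate hE hC (hF hf)
      linarith
  have h3 : ∑ f ∈ F, ((C.image (f * ·) ∩ E).card : ℝ) ≤ E.card := by exact_mod_cast h1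
  simp only [Finset.sum_const, nsmul_eq_mul] at h2
  have h4 : (F.card * (γ - 2 * ε)) * E.card ≤ 1 * E.card := by linarith
  exact le_of_mul_le_mul_right h4 hpos

/-- Corollary 3.5. If `d(A) = α > 0` and `d(B) = β > 0`, then `AB` is piecewise `k`-syndetic
with `k = ⌊1/(αβ)⌋`. -/
theorem stmt9 {G : Type*} [Group G] [DecidableEq G] (hG : IsAmenable G)
    (A B : Set G) (α β : ℝ) (hα : 0 < α) (hβ : 0 < β)
    (hdA : banachDensity A = α) (hdB : banachDensity B = β) :
    PiecewiseSyndetic ⌊1 / (α * β)⌋₊ (A * B) := by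
  subst hdA hdB
  set γ := banachDensity A * banachDensity B with hγdef
  have hγ : 0 < γ := mul_pos hα hβ
  choose E C t hE hCE hCAB hCγ using fun i : Finset G × ℕ =>
    exists_dense_inter A B hα hβ i.1 (Nat.one_div_pos_of_nat (α := ℝ) (n := i.2))
  let U : Ultrafilter (Finset G × ℕ) := Ultrafilter.of Filter.atTop
  have hU : (U : Filter (Finset G × ℕ)) ≤ Filter.atTop := Ultrafilter.of_le _
  -- `S` is the ultralimit of the difference sets `C i * (C i)⁻¹`.
  let S : Set G := {g | ∀ᶠ i in (U : Filter (Finset G × ℕ)), ∃ c ∈ C i, ∃ c' ∈ C i, g * c' = c}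
  have hlim : Filter.Tendsto (fun i : Finset G × ℕ => 1 / ((i.2 : ℝ) + 1)) U (nhds 0) :=
    (tendsto_one_div_add_atTop_nhds_zero_nat.comp
      (by rw [← Filter.prod_atTop_atTop_eq]; exact Filter.tendsto_snd)).mono_left hU
  have hone : (1 : G) ∈ S := by
    filter_upwards [hlim.eventually (gt_mem_nhds hγ)] with i hi
    have hpos : (0 : ℝ) < (E i).card := by exact_mod_cast (hE i).1.card_pos
    have h0 : (0 : ℝ) < (C i).card :=
      lt_of_lt_of_le (mul_pos (sub_pos.2 hi) hpos) (hCγ i)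
    obtain ⟨c, hc⟩ := Finset.card_pos.1 (by exact_mod_cast h0)
    exact ⟨c, hc, c, hc, one_mul c⟩
  have hsymm : ∀ g ∈ S, g⁻¹ ∈ S := by
    intro g hg
    filter_upwards [hg] with i ⟨c, hc, c', hc', h⟩
    exact ⟨c', hc', c, hc, by rw [← h, inv_mul_cancel_left]⟩
  let P : Finset G → Prop := fun F => ∀ f ∈ F, ∀ f' ∈ F, f ≠ f' → f⁻¹ * f' ∉ S
  have hbound : ∀ F, P F → F.card ≤ ⌊1 / γ⌋₊ := by
    intro F hF
    have hdisj : ∀ᶠ i in (U : Filter (Finset G × ℕ)), ∀ f ∈ F, ∀ f' ∈ F, f ≠ f' →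
        ∀ c ∈ C i, ∀ c' ∈ C i, f * c ≠ f' * c' := by
      rw [Filter.eventually_all_finset]
      intro f hf
      rw [Filter.eventually_all_finset]
      intro f' hf'
      by_cases hne : f = f'
      · exact Filter.Eventually.of_forall fun i h => absurd hne h
      have h := Ultrafilter.eventually_not.2 (hF f hf f' hf' hne)
      filter_upwards [h] with i hi _ c hc c' hc' heq
      exact hi ⟨c, hc, c', hc', by rw [mul_assoc, ← heq, inv_mul_cancel_left]⟩
    have hsub : ∀ᶠ i in (U : Filter (Finset G × ℕ)), F ⊆ i.1 :=
      hU ((Filter.eventually_ge_atTop (F, 0)).mono fun i hi => hi.1)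
    have hle : ∀ᶠ i in (U : Filter (Finset G × ℕ)),
        F.card * (γ - 2 * (1 / ((i.2 : ℝ) + 1))) ≤ 1 := by
      filter_upwards [hdisj, hsub] with i h1 h2
      exact card_mul_le_one (hE i) (hCE i) h2 (hCγ i) h1
    have htend : Filter.Tendsto
        (fun i : Finset G × ℕ => F.card * (γ - 2 * (1 / ((i.2 : ℝ) + 1)))) U
        (nhds (F.card * (γ - 2 * 0))) := ((hlim.const_mul 2).const_sub γ).const_mul _
    have h := le_of_tendsto htend hle
    refine Nat.le_floor ?_
    rw [le_div_iff₀ hγ]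
    linarith
  obtain ⟨F, hPF, hmax⟩ : ∃ F, P F ∧ ∀ F', P F' → F'.card ≤ F.card := by
    have hex : ∃ n, ∃ F, P F ∧ F.card = n := ⟨0, ∅, by simp [P], rfl⟩
    obtain ⟨F, hF, hc⟩ := Nat.sSup_mem (s := {n | ∃ F, P F ∧ F.card = n}) hex
      ⟨⌊1 / γ⌋₊, by rintro _ ⟨F, hF, rfl⟩; exact hbound F hF⟩
    refine ⟨F, hF, fun F' hF' => ?_⟩
    rw [hc]
    exact le_csSup ⟨⌊1 / γ⌋₊, by rintro _ ⟨F, hF, rfl⟩; exact hbound F hF⟩ ⟨F', hF', rfl⟩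
  -- A packing `F` of maximal size is also a covering: `F * S = G`.
  have hcover : ∀ g : G, ∃ f ∈ F, f⁻¹ * g ∈ S := by
    intro g
    by_contra! hg
    have hgF : g ∉ F := fun h => hg g h (by simpa using hone)
    have hP : P (insert g F) := by
      intro f hf f' hf' hne
      rcases Finset.mem_insert.1 hf with rfl | hfF <;>
        rcases Finset.mem_insert.1 hf' with rfl | hfF'
      · exact absurd rfl hne
      · intro h
        exact hg f' hfF' (by simpa using hsymm _ h)
      · exact hg f hfF
      · exact hPF f hfF f' hfF' hne
    have := hmax _ hP
    rw [Finset.card_insert_of_notMem hgF] at this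
    omega
  refine ⟨F, hbound F hPF, fun H => ?_⟩
  have hev : ∀ᶠ i in (U : Filter (Finset G × ℕ)), ∀ h ∈ H, h * t i ∈ (↑F : Set G) * (A * B) := by
    rw [Filter.eventually_all_finset]
    intro h _
    obtain ⟨f, hf, hfS⟩ := hcover h
    filter_upwards [hfS] with i ⟨c, hc, c', hc', heq⟩
    -- Here `h = f c c'⁻¹`, so `h t = f * (c * (c'⁻¹ t))` with `c ∈ A` and `c'⁻¹ t ∈ B`.
    refine Set.mem_mul.2 ⟨f, hf, c * (c'⁻¹ * t i),
      Set.mul_mem_mul (hCAB i c hc).1 (hCAB i c' hc').2, ?_⟩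
    rw [← heq]
    group
  obtain ⟨i, hi⟩ := hev.exists
  exact ⟨t i, hi⟩
end

section
/- Let G be an amenable group, let ε ≥ 0, and let A, B ⊆ G. If A is finitely embeddable in B (A ◁ B), then Δ_ε(A) ⊆ Δ_ε(B). -/
/-!
Right translation by `x` commutes with left multiplication, so it preserves `(H, ε)`-invariance.
Hence if `C ◁ D` and `K` is a Følner set, choosing `x` with `(C ∩ K)x ⊆ D` gives a Følner set
`Kx` of the same size with `|C ∩ K| ≤ |D ∩ Kx|`: the Banach density is monotone under `◁`
(`banachDensity_mono_of_finEmbeddable`). It remains to see that `A ◁ B` implies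
`A ∩ gA ◁ B ∩ gB`: for finite `F ⊆ A ∩ gA`, apply the hypothesis to `F ∪ g⁻¹F ⊆ A`
(`FinEmbeddable.inter_translate`).
-/

open scoped Pointwise symmDiff

variable {G : Type*}

lemma IsFolnerInvariant.image_mul_right {G : Type*} [Group G] [DecidableEq G] {H : Finset G}
    {ε : ℝ} {K : Finset G} (hK : IsFolnerInvariant H ε K) (x : G) :
    IsFolnerInvariant H ε (K.image (· * x)) := by
  have inj : Function.Injective (fun k : G => k * x) := mul_left_injective x
  refine ⟨hK.1.image _, fun h hh => ?_⟩
  have e : (K.image (· * x)).image (h * ·) = (K.image (h * ·)).image (· * x) := by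
    simp only [Finset.image_image]
    congr 1
    funext k
    simp [mul_assoc]
  rw [e, ← Finset.image_symmDiff _ _ inj, Finset.card_image_of_injective _ inj,
    Finset.card_image_of_injective _ inj]
  exact hK.2 h hh

lemma banachDensity_mono_of_finEmbeddable {G : Type*} [Group G] [DecidableEq G]
    (hG : IsAmenable G) {C D : Set G} (h : FinEmbeddable C D) :
    banachDensity C ≤ banachDensity D := by
  classical
  unfold banachDensity
  -- Real suprema are only monotone for nonempty bounded sets: amenability puts `0` in the
  -- set for `C`, and `1` bounds the set for `D`.
  refine csSup_le_csSup ⟨1, fun α hα => ?_⟩ ⟨0, fun H ε hε => ?_⟩ fun α hα H ε hε => ?_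
  · obtain ⟨K, -, hle⟩ := hα ∅ 1 one_pos
    refine hle.trans (div_le_one_of_le₀ ?_ (Nat.cast_nonneg _))
    have := Set.ncard_le_ncard (Set.inter_subset_right : D ∩ ↑K ⊆ ↑K) K.finite_toSet
    rw [Set.ncard_coe_finset] at this
    exact_mod_cast this
  · obtain ⟨K, hK⟩ := hG H ε hε
    exact ⟨K, hK, by positivity⟩
  · obtain ⟨K, hK, hle⟩ := hα H ε hε
    obtain ⟨x, hx⟩ := h (K.filter (· ∈ C)) (by intro k hk; simp at hk; exact hk.2)
    have inj : Function.Injective (fun k : G => k * x) := mul_left_injective x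
    refine ⟨K.image (· * x), hK.image_mul_right x, hle.trans ?_⟩
    rw [Finset.card_image_of_injective _ inj]
    refine div_le_div_of_nonneg_right (Nat.cast_le.2 ?_) (Nat.cast_nonneg _)
    rw [← Set.ncard_image_of_injective (C ∩ ↑K) inj]
    refine Set.ncard_le_ncard ?_ ((Finset.finite_toSet _).inter_of_right _)
    rintro _ ⟨k, ⟨hkC, hkK⟩, rfl⟩
    exact ⟨hx k (Finset.mem_filter.2 ⟨hkK, hkC⟩),
      Finset.mem_coe.2 (Finset.mem_image_of_mem _ hkK)⟩

lemma FinEmbeddable.inter_translate {G : Type*} [Group G] {A B : Set G}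
    (h : FinEmbeddable A B) (g : G) :
    FinEmbeddable (A ∩ (g * ·) '' A) (B ∩ (g * ·) '' B) := by
  classical
  intro F hF
  obtain ⟨x, hx⟩ := h (F ∪ F.image (g⁻¹ * ·)) (by
    intro y hy
    rcases Finset.mem_union.1 (Finset.mem_coe.1 hy) with hy | hy
    · exact (hF hy).1
    · obtain ⟨f, hf, rfl⟩ := Finset.mem_image.1 hy
      obtain ⟨a, ha, rfl⟩ := (hF hf).2
      simpa using ha)
  refine ⟨x, fun f hf => ⟨hx f (Finset.mem_union_left _ hf), g⁻¹ * f * x,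
    hx _ (Finset.mem_union_right _ (Finset.mem_image_of_mem _ hf)), ?_⟩⟩
  simp [mul_assoc]

/-- If `G` is amenable, `ε ≥ 0` and `A ◁ B`, then `Δ_ε(A) ⊆ Δ_ε(B)`. -/
theorem stmt12 {G : Type*} [Group G] [DecidableEq G] (hG : IsAmenable G)
    (ε : ℝ) (hε : 0 ≤ ε) (A B : Set G) (h : FinEmbeddable A B) :
    deltaSet ε A ⊆ deltaSet ε B :=
  fun g hg => lt_of_lt_of_le hg (banachDensity_mono_of_finEmbeddable hG (h.inter_translate g))
end

section
/- Let G be an amenable group and k a positive integer. If A ⊆ G is k-syndetic, then the lower Banach density of A satisfies d̲(A) ≥ 1/k. -/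
/-!
If `G = F·A` with `|F| ≤ k`, every finite `K` is the union of the sets `K ∩ fA`, `f ∈ F`. Translating
by `f⁻¹` turns `K ∩ fA` into `f⁻¹K ∩ A`, which exceeds `A ∩ K` by at most `|f⁻¹K ∆ K|` elements. So if
`K` is `(F⁻¹, ε)`-invariant, then `|K| ≤ k (|A ∩ K| + ε|K|)`, that is `|A ∩ K|/|K| ≥ 1/k - ε`; this is
`density_ge_of_syndetic`. Hence `1/k - ε` is an admissible lower bound for every `ε > 0`.

Amenability is needed only so that the supremum defining the lower density is a genuine one: it
provides some invariant `K` for each `(H, ε)`, so admissible lower bounds are at most `1`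
(`bddAbove_lowerBanachDensity`); without it the supremum would have the junk value `0`.
-/

open scoped Pointwise symmDiff

variable {G : Type*}

theorem bddAbove_lowerBanachDensity {G : Type*} [Group G] [DecidableEq G] (hG : IsAmenable G)
    (A : Set G) :
    BddAbove {α : ℝ | ∃ (H : Finset G) (ε : ℝ), 0 < ε ∧
      ∀ K : Finset G, IsFolnerInvariant H ε K → α ≤ ((A ∩ ↑K).ncard : ℝ) / K.card} := by
  refine ⟨1, ?_⟩
  rintro α ⟨H, ε, hε, hα⟩
  obtain ⟨K, hK⟩ := hG H ε hε
  refine (hα K hK).trans (div_le_one_of_le₀ ?_ (Nat.cast_nonneg _))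
  have h1 := Set.ncard_le_ncard (Set.inter_subset_right : A ∩ ↑K ⊆ ↑K) K.finite_toSet
  rw [Set.ncard_coe_finset] at h1
  exact_mod_cast h1

open Classical in
/-- Translation by `f⁻¹` embeds `K ∩ fA` into `(A ∩ K) ∪ (f⁻¹K ∆ K)`. -/
theorem card_translate_le {G : Type*} [Group G] [DecidableEq G] (A : Set G) (K : Finset G) (f : G) :
    (K.filter (fun g => f⁻¹ * g ∈ A)).card ≤
      (A ∩ ↑K).ncard + ((K.image (f⁻¹ * ·)) ∆ K).card := by
  have hA : (A ∩ ↑K).ncard = (K.filter (· ∈ A)).card := by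
    rw [← Set.ncard_coe_finset]
    congr 1
    ext x
    simp [and_comm]
  rw [hA]
  refine le_trans ?_ (Finset.card_union_le _ _)
  refine Finset.card_le_card_of_injOn (f⁻¹ * ·) ?_ (mul_right_injective f⁻¹).injOn
  intro g hg
  have hg' : g ∈ K ∧ f⁻¹ * g ∈ A := by simpa using hg
  by_cases hfg : f⁻¹ * g ∈ K
  · simp [hfg, hg'.2]
  · exact Finset.mem_union_right _ (Finset.mem_symmDiff.2
      (Or.inl ⟨Finset.mem_image_of_mem (f⁻¹ * ·) hg'.1, hfg⟩))

theorem density_ge_of_syndetic {G : Type*} [Group G] [DecidableEq G] {k : ℕ} (hk : 0 < k)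
    {A : Set G} {F K : Finset G} (hF : F.card ≤ k) (hFA : ∀ g : G, g ∈ (↑F : Set G) * A)
    {ε : ℝ} (hε : 0 < ε) (hK : IsFolnerInvariant (F.image (·⁻¹)) ε K) :
    1 / (k : ℝ) - ε ≤ ((A ∩ ↑K).ncard : ℝ) / K.card := by
  classical
  obtain ⟨hne, hinv⟩ := hK
  have hKpos : (0 : ℝ) < K.card := by exact_mod_cast hne.card_pos
  have hkpos : (0 : ℝ) < k := by exact_mod_cast hk
  have hcover : K ⊆ F.biUnion (fun f => K.filter (fun g => f⁻¹ * g ∈ A)) := by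
    intro g hg
    obtain ⟨f, hf, a, ha, rfl⟩ := hFA g
    simp only [Finset.mem_biUnion, Finset.mem_filter]
    exact ⟨f, hf, hg, by simpa using ha⟩
  have hsum : (K.card : ℝ) ≤ ∑ f ∈ F, ((K.filter (fun g => f⁻¹ * g ∈ A)).card : ℝ) := by
    exact_mod_cast (Finset.card_le_card hcover).trans Finset.card_biUnion_le
  have hterm : ∀ f ∈ F, ((K.filter (fun g => f⁻¹ * g ∈ A)).card : ℝ) ≤
      (A ∩ ↑K).ncard + ε * K.card := by
    intro f hf
    have h1 : ((K.filter (fun g => f⁻¹ * g ∈ A)).card : ℝ) ≤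
        (A ∩ ↑K).ncard + ((K.image (f⁻¹ * ·)) ∆ K).card := by
      exact_mod_cast card_translate_le A K f
    linarith [hinv f⁻¹ (Finset.mem_image_of_mem _ hf)]
  have hle : (K.card : ℝ) ≤ k * ((A ∩ ↑K).ncard + ε * K.card) := by
    refine (hsum.trans (Finset.sum_le_card_nsmul _ _ _ hterm)).trans ?_
    rw [nsmul_eq_mul]
    gcongr
  have hdiv : (K.card : ℝ) / k ≤ (A ∩ ↑K).ncard + ε * K.card := by
    rwa [div_le_iff₀' hkpos]
  rw [le_div_iff₀ hKpos, sub_mul, one_div_mul_eq_div]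
  linarith

/-- If `A` is `k`-syndetic in an amenable group, then the lower Banach density of `A`
is at least `1/k`. -/
theorem stmt14 {G : Type*} [Group G] [DecidableEq G] (hG : IsAmenable G)
    (k : ℕ) (hk : 0 < k) (A : Set G) (h : IsSyndetic k A) :
    1 / (k : ℝ) ≤ lowerBanachDensity A := by
  obtain ⟨F, hF, hFA⟩ := h
  refine le_of_forall_pos_le_add fun ε hε => ?_
  rw [← sub_le_iff_le_add]
  exact le_csSup (bddAbove_lowerBanachDensity hG A)
    ⟨F.image (·⁻¹), ε, hε, fun K hK => density_ge_of_syndetic hk hF hFA hε hK⟩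
end
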